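/- Let $p(X) = \left(X^2 + \tfrac{25 + 22\sqrt{2}}{64}\right)^3\left(X^2 + X + \tfrac{97 + 54\sqrt{2}}{64}\right) \in \mathbb{C}[X]$, where $\sqrt{2}$ denotes the positive real square root of $2$; this is a polynomial of degree $8$. The Galois group of the polynomial $p(Y) - t$ in the variable $Y$ over the field $\mathbb{C}(t)$ of rational functions is isomorphic as a group to $PGL_2(\mathbb{F}_7)$, the quotient of $GL_2(\mathbb{F}_7)$ by its center. -/

import Mathlib

open Polynomial

/-!
With `Z = 8Y` the equation `p(Y) = t` becomes
`(Z² + 25 + 22√2)³ (Z² + 8Z + 97 + 54√2) = 8⁸ t`; its solutions `Z` are called roots below.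

The unordered pairs of roots are parametrized by a rational curve: there is a rational function
`8⁸ t = N(x) / Q(x)⁸` of degree `28 = (8 choose 2)` such that over `ℂ(x)` the octic has the
quadratic factor `Z² - (A/Q) Z + B/Q²`, of discriminant `D G² / Q²` (`octic_eq`,
`disc_formula`). Conversely `x` is a rational function of the sum and the product of the two roots
(`recover`). A symmetric correspondence `Φ(x, y) = 0`, cubic in `y`, preserves `t` (`T_invariant`),
and the three solutions `y₀, y₁, y₂` for given `x` describe the other six roots in pairs. The
discriminant of `Φ(x, ·)` is a square times `D(x)` (`disc_phi`), and on the correspondence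
`-2 x D(y)` is an explicit square (`yhat_sq`, used with `x` and `y` exchanged). Hence all eight
roots lie in `L = ℂ(x)(y₀, y₁, y₂, r)` with `r² = -2x`; there `w = √D(x)` and `√D(y_k)` become
rational expressions.

The polynomial `Φ(x, ·)` is irreducible over `ℂ(x)` (`phi_ne_zero`) and `-2x`, `D(x)`, `-2x D(x)`
are not squares, so `[L : ℂ(x)]` is divisible by `12` (`twelve_dvd`) and
`[L : ℂ(t)] ≥ 28 · 12 = 336`. The roots generate `L`. An automorphism of `L` over `ℂ(t)` fixing
the two roots attached to `x` and one root attached to `y₀` fixes `x`, `w`, `y₀`, `r`; since it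
fixes `w`, it permutes the `y_k` evenly, so it fixes all of them and is trivial
(`OcticData.root_stab`).

The Galois group thus has order at least `336` and acts on eight points with a triple whose
pointwise stabilizer is trivial. As there are `8 · 7 · 6 = 336` ordered triples, it is sharply
3-transitive, and a sharply 3-transitive group of degree `8` is `PGL₂(𝔽₇)` acting on the projective
line (`pgl_of_sharp`).

The polynomial identities with coefficients in `ℤ[√2]` are verified by kernel computation on
coefficient lists (`QPoly`), the large ones by Kronecker substitution (`QPoly.isZero_of_evalc`).
-/

/-- The monodromy group of a complex polynomial `p`: the Galois group of `p(Y) - t`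
over the field `ℂ(t)` of rational functions. -/
noncomputable def monodromyGroup (p : Polynomial ℂ) : Type :=
  (p.map (algebraMap ℂ (RatFunc ℂ)) - C RatFunc.X).Gal

noncomputable instance (p : Polynomial ℂ) : Group (monodromyGroup p) :=
  inferInstanceAs (Group (p.map (algebraMap ℂ (RatFunc ℂ)) - C RatFunc.X).Gal)

/-! ### Sharply 3-transitive groups of degree eight -/
section Group
open OnePoint Matrix

/-- The projective line over `𝔽₇`. -/
abbrev P7 : Type := OnePoint (ZMod 7)

lemma fact_prime_seven : Fact (Nat.Prime 7) := ⟨by norm_num⟩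

attribute [local instance] fact_prime_seven

/-- The permutation representation of `GL₂(𝔽₇)` on the projective line by Möbius transformations. -/
noncomputable def moebius : GL (Fin 2) (ZMod 7) →* Equiv.Perm P7 :=
  MulAction.toPermHom (GL (Fin 2) (ZMod 7)) P7

/-- A matrix inducing the translation `y ↦ y + x`. -/
noncomputable def trM (x : ZMod 7) : GL (Fin 2) (ZMod 7) :=
  GeneralLinearGroup.mkOfDetNeZero !![1, x; 0, 1] (by simp [Matrix.det_fin_two])

/-- A matrix inducing the scaling `y ↦ u y`. -/
noncomputable def scM (u : ZMod 7) (hu : u ≠ 0) : GL (Fin 2) (ZMod 7) :=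
  GeneralLinearGroup.mkOfDetNeZero !![u, 0; 0, 1] (by simpa [Matrix.det_fin_two])

/-- A matrix inducing the inversion `y ↦ y⁻¹`. -/
noncomputable def invM : GL (Fin 2) (ZMod 7) :=
  GeneralLinearGroup.mkOfDetNeZero !![0, 1; 1, 0] (by simp [Matrix.det_fin_two])

lemma moebius_tr_infty (x : ZMod 7) : moebius (trM x) ∞ = ∞ := by
  simp [moebius, smul_infty_eq_ite, trM, GeneralLinearGroup.mkOfDetNeZero]

lemma moebius_tr_coe (x y : ZMod 7) : moebius (trM x) (y : P7) = ((y + x : ZMod 7) : P7) := by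
  simp [moebius, smul_some_eq_ite, trM, GeneralLinearGroup.mkOfDetNeZero]

lemma moebius_sc_infty (u : ZMod 7) (hu) : moebius (scM u hu) ∞ = ∞ := by
  simp [moebius, smul_infty_eq_ite, scM, GeneralLinearGroup.mkOfDetNeZero]

lemma moebius_sc_coe (u : ZMod 7) (hu) (y : ZMod 7) :
    moebius (scM u hu) (y : P7) = ((u * y : ZMod 7) : P7) := by
  simp [moebius, smul_some_eq_ite, scM, GeneralLinearGroup.mkOfDetNeZero]

lemma moebius_inv_infty : moebius invM ∞ = ((0 : ZMod 7) : P7) := by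
  simp [moebius, smul_infty_eq_ite, invM, GeneralLinearGroup.mkOfDetNeZero]

lemma moebius_inv_zero : moebius invM ((0 : ZMod 7) : P7) = ∞ := by
  simp [moebius, smul_some_eq_ite, invM, GeneralLinearGroup.mkOfDetNeZero]

lemma moebius_inv_coe (y : ZMod 7) (hy : y ≠ 0) :
    moebius invM (y : P7) = ((y⁻¹ : ZMod 7) : P7) := by
  simp [moebius, smul_some_eq_ite, invM, GeneralLinearGroup.mkOfDetNeZero, hy]

/-- A Möbius transformation fixing `∞`, `0` and `1` comes from a scalar matrix. -/
lemma moebius_fix (g : GL (Fin 2) (ZMod 7)) (h1 : moebius g ∞ = ∞)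
    (h2 : moebius g ((0 : ZMod 7) : P7) = ((0 : ZMod 7) : P7))
    (h3 : moebius g ((1 : ZMod 7) : P7) = ((1 : ZMod 7) : P7)) :
    ∃ r : ZMod 7, g.val = Matrix.scalar (Fin 2) r := by
  simp only [moebius, MulAction.toPermHom_apply, MulAction.toPerm_apply,
    smul_infty_eq_self_iff] at h1
  simp only [moebius, MulAction.toPermHom_apply, MulAction.toPerm_apply, smul_some_eq_ite, h1,
    zero_add, mul_zero, mul_one] at h2 h3
  have hd : g 1 1 ≠ 0 := by
    intro h; rw [if_pos h] at h2; exact OnePoint.infty_ne_coe _ h2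
  rw [if_neg hd] at h2 h3
  have h2' := OnePoint.coe_injective h2
  have h3' := OnePoint.coe_injective h3
  have hb : g 0 1 = 0 := by
    rcases div_eq_zero_iff.1 h2' with h | h
    · exact h
    · exact absurd h hd
  rw [hb, add_zero, div_eq_one_iff_eq hd] at h3'
  refine ⟨g 1 1, ?_⟩
  ext i j
  fin_cases i <;> fin_cases j <;> simp_all

lemma moebius_ker : moebius.ker = Subgroup.center (GL (Fin 2) (ZMod 7)) := by
  ext g
  rw [Matrix.GeneralLinearGroup.mem_center_iff_val_mem_range_scalar, MonoidHom.mem_ker]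
  constructor
  · intro h
    obtain ⟨r, hr⟩ := moebius_fix g (by simp [h]) (by simp [h]) (by simp [h])
    exact ⟨r, hr.symm⟩
  · rintro ⟨r, hr⟩
    have e : ∀ i j, g i j = (Matrix.scalar (Fin 2) r) i j := fun i j => by rw [hr]
    have hr0 : r ≠ 0 := by
      rintro rfl
      have := g.det_ne_zero
      simp [← hr] at this
    ext x
    induction x using OnePoint.rec with
    | infty => simp [moebius, smul_infty_eq_ite, e]
    | coe x => simp [moebius, smul_some_eq_ite, e, hr0]

/-- A subgroup containing the translations, scalings and the inversion is transitive enough to move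
any permutation `f` to one fixing `∞`, `0` and `1`. -/
lemma exists_reduce (Q : Subgroup (Equiv.Perm P7)) (hT : ∀ x, moebius (trM x) ∈ Q)
    (hS : ∀ u hu, moebius (scM u hu) ∈ Q) (hI : moebius invM ∈ Q) (f : Equiv.Perm P7) :
    ∃ k ∈ Q, (k * f) ∞ = ∞ ∧ (k * f) ((0 : ZMod 7) : P7) = ((0 : ZMod 7) : P7) ∧
      (k * f) ((1 : ZMod 7) : P7) = ((1 : ZMod 7) : P7) := by
  obtain ⟨k1, hk1, e1⟩ : ∃ k ∈ Q, (k * f) ∞ = ∞ := by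
    induction h : f ∞ using OnePoint.rec with
    | infty => exact ⟨1, Q.one_mem, by simpa using h⟩
    | coe x =>
      refine ⟨moebius invM * moebius (trM (-x)), Q.mul_mem hI (hT _), ?_⟩
      simp [h, moebius_tr_coe, moebius_inv_zero]
  obtain ⟨k2, hk2, e2, e2'⟩ : ∃ k ∈ Q, (k * f) ∞ = ∞ ∧
      (k * f) ((0 : ZMod 7) : P7) = ((0 : ZMod 7) : P7) := by
    induction h : (k1 * f) ((0 : ZMod 7) : P7) using OnePoint.rec with
    | infty => exact absurd ((k1 * f).injective (h.trans e1.symm)) (OnePoint.coe_ne_infty _)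
    | coe x =>
      refine ⟨moebius (trM (-x)) * k1, Q.mul_mem (hT _) hk1, ?_, ?_⟩
      · rw [mul_assoc, Equiv.Perm.mul_apply, e1, moebius_tr_infty]
      · rw [mul_assoc, Equiv.Perm.mul_apply, h, moebius_tr_coe]; simp
  induction h : (k2 * f) ((1 : ZMod 7) : P7) using OnePoint.rec with
  | infty => exact absurd ((k2 * f).injective (h.trans e2.symm)) (OnePoint.coe_ne_infty _)
  | coe x =>
    have hx : x ≠ 0 := by
      rintro rfl
      have := OnePoint.coe_injective ((k2 * f).injective (h.trans e2'.symm))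
      exact one_ne_zero this
    refine ⟨moebius (scM x⁻¹ (inv_ne_zero hx)) * k2, Q.mul_mem (hS _ _) hk2, ?_, ?_, ?_⟩
    · rw [mul_assoc, Equiv.Perm.mul_apply, e2, moebius_sc_infty]
    · rw [mul_assoc, Equiv.Perm.mul_apply, e2', moebius_sc_coe, mul_zero]
    · rw [mul_assoc, Equiv.Perm.mul_apply, h, moebius_sc_coe, inv_mul_cancel₀ hx]

/-- A sharply 3-transitive permutation group on the projective line over `𝔽₇` which contains the
translations, and in which the stabilizer of `∞` normalizes them, is the group of Möbius
transformations. The stabilizer of `∞` and `0` is forced to consist of the scalings. The element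
exchanging `∞` and `0` and fixing `1` normalizes them, hence acts on `𝔽₇ˣ` as an automorphism of
this cyclic group of order `6`; it is not the identity, so it is the inversion. -/
lemma eq_range_moebius (H : Subgroup (Equiv.Perm P7))
    (hex : ∀ a b c : P7, a ≠ b → a ≠ c → b ≠ c →
      ∃ h ∈ H, h ∞ = a ∧ h ((0 : ZMod 7) : P7) = b ∧ h ((1 : ZMod 7) : P7) = c)
    (huniq : ∀ h ∈ H, ∀ a b c : P7, a ≠ b → a ≠ c → b ≠ c → h a = a → h b = b → h c = c → h = 1)
    (hT : moebius (trM 1) ∈ H)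
    (hN : ∀ h ∈ H, h ∞ = ∞ → ∃ k : ZMod 7, ∀ x, h (moebius (trM 1) x) = moebius (trM k) (h x)) :
    H = moebius.range := by
  have hT' : ∀ x, moebius (trM x) ∈ H := by
    have key : ∀ n : ℕ, moebius (trM (n : ZMod 7)) = moebius (trM 1) ^ n := by
      intro n
      induction n with
      | zero =>
        ext x
        induction x using OnePoint.rec with
        | infty => simp [moebius_tr_infty]
        | coe x => simp [moebius_tr_coe]
      | succ n ih =>
        rw [pow_succ', ← ih]
        ext x
        induction x using OnePoint.rec with
        | infty => simp [moebius_tr_infty]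
        | coe x => simp [moebius_tr_coe, add_assoc]
    intro x
    have := key x.val
    rw [ZMod.natCast_zmod_val] at this
    rw [this]
    exact H.pow_mem hT _
  have hlin : ∀ h ∈ H, h ∞ = ∞ → h ((0 : ZMod 7) : P7) = ((0 : ZMod 7) : P7) →
      ∃ k : ZMod 7, ∀ x : ZMod 7, h (x : P7) = ((k * x : ZMod 7) : P7) := by
    intro h hh e1 e2
    obtain ⟨k, hk⟩ := hN h hh e1
    refine ⟨k, ?_⟩
    have : ∀ n : ℕ, h ((n : ZMod 7) : P7) = ((k * n : ZMod 7) : P7) := by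
      intro n
      induction n with
      | zero => rw [Nat.cast_zero, mul_zero, e2]
      | succ n ih =>
        have := hk ((n : ZMod 7) : P7)
        rw [moebius_tr_coe, ih, moebius_tr_coe] at this
        rw [Nat.cast_succ, this, mul_add, mul_one]
    intro x
    simpa only [ZMod.natCast_zmod_val] using this x.val
  have hS : ∀ u hu, moebius (scM u hu) ∈ H := by
    intro u hu
    obtain ⟨h, hh, e1, e2, e3⟩ := hex ∞ ((0 : ZMod 7) : P7) (u : P7) (OnePoint.infty_ne_coe _)
      (OnePoint.infty_ne_coe _) (fun h => hu (OnePoint.coe_injective h).symm)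
    obtain ⟨k, hk⟩ := hlin h hh e1 e2
    have hku : k = u := by
      have := hk 1
      rw [e3, mul_one] at this
      exact (OnePoint.coe_injective this).symm
    have : moebius (scM u hu) = h := by
      ext x
      induction x using OnePoint.rec with
      | infty => rw [moebius_sc_infty, e1]
      | coe x => rw [moebius_sc_coe, hk, hku]
    rw [this]; exact hh
  have hI : moebius invM ∈ H := by
    obtain ⟨h, hh, e1, e2, e3⟩ := hex ((0 : ZMod 7) : P7) ∞ ((1 : ZMod 7) : P7)
      (OnePoint.coe_ne_infty _) (fun h => zero_ne_one (OnePoint.coe_injective h))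
      (OnePoint.infty_ne_coe _)
    have hval : ∀ x : ZMod 7, ∃ y : ZMod 7, x ≠ 0 → (h (x : P7) = (y : P7) ∧ y ≠ 0) := by
      intro x
      by_cases hx : x = 0
      · exact ⟨0, fun h => absurd hx h⟩
      induction hy : h (x : P7) using OnePoint.rec with
      | infty => exact absurd (OnePoint.coe_injective (h.injective (hy.trans e2.symm))) hx
      | coe y =>
        refine ⟨y, fun _ => ⟨rfl, ?_⟩⟩
        rintro rfl
        exact OnePoint.coe_ne_infty _ (h.injective (hy.trans e1.symm))
    choose φ hφ using hval
    have hmul : ∀ u x : ZMod 7, u ≠ 0 → x ≠ 0 → φ (u * x) = φ u * φ x := by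
      intro u x hu hx
      have hm : h * moebius (scM u hu) * h⁻¹ ∈ H := H.mul_mem (H.mul_mem hh (hS u hu)) (H.inv_mem hh)
      have i1 : h⁻¹ ∞ = ((0 : ZMod 7) : P7) := by rw [Equiv.Perm.inv_eq_iff_eq, e2]
      have i2 : h⁻¹ ((0 : ZMod 7) : P7) = ∞ := by rw [Equiv.Perm.inv_eq_iff_eq, e1]
      have i3 : h⁻¹ ((1 : ZMod 7) : P7) = ((1 : ZMod 7) : P7) := by
        rw [Equiv.Perm.inv_eq_iff_eq, e3]
      obtain ⟨k, hk⟩ := hlin _ hm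
        (by rw [Equiv.Perm.mul_apply, Equiv.Perm.mul_apply, i1, moebius_sc_coe, mul_zero, e2])
        (by rw [Equiv.Perm.mul_apply, Equiv.Perm.mul_apply, i2, moebius_sc_infty, e1])
      have hku : φ u = k := by
        have := hk 1
        rw [Equiv.Perm.mul_apply, Equiv.Perm.mul_apply, i3, moebius_sc_coe, mul_one, mul_one,
          (hφ u hu).1] at this
        exact OnePoint.coe_injective this
      have i4 : h⁻¹ (h (x : P7)) = x := by simp
      have := hk (φ x)
      rw [← (hφ x hx).1, Equiv.Perm.mul_apply, Equiv.Perm.mul_apply, i4,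
        moebius_sc_coe, (hφ _ (mul_ne_zero hu hx)).1] at this
      rw [hku]
      exact OnePoint.coe_injective this
    have hφ1 : φ 1 = 1 := OnePoint.coe_injective ((hφ 1 one_ne_zero).1.symm.trans e3)
    have hinj : ∀ x y : ZMod 7, x ≠ 0 → y ≠ 0 → φ x = φ y → x = y := by
      intro x y hx hy hxy
      apply OnePoint.coe_injective
      apply h.injective
      rw [(hφ x hx).1, (hφ y hy).1, hxy]
    have p2 : φ 2 = φ 3 * φ 3 := by rw [← hmul 3 3 (by decide) (by decide)]; rfl
    have p6 : φ 6 = φ 3 * φ 2 := by rw [← hmul 3 2 (by decide) (by decide)]; rfl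
    have p4 : φ 4 = φ 3 * φ 6 := by rw [← hmul 3 6 (by decide) (by decide)]; rfl
    have p5 : φ 5 = φ 3 * φ 4 := by rw [← hmul 3 4 (by decide) (by decide)]; rfl
    have n2 : φ 2 ≠ 1 := fun h => absurd (hinj 2 1 (by decide) (by decide) (h.trans hφ1.symm)) (by decide)
    have n6 : φ 6 ≠ 1 := fun h => absurd (hinj 6 1 (by decide) (by decide) (h.trans hφ1.symm)) (by decide)
    -- `3` generates `𝔽₇ˣ`, and its image must be a generator again
    have h35 : φ 3 = 3 ∨ φ 3 = 5 := by
      have h0 := (hφ 3 (by decide)).2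
      rw [p2] at p6
      rw [p2] at n2
      rw [p6] at n6
      revert n2 n6 h0
      generalize φ 3 = v
      revert v
      decide
    rcases h35 with h3 | h3
    · -- here `h` would be the identity on `𝔽₇ˣ`, against sharpness
      exfalso
      rw [h3] at p2
      have := huniq h hh ((1 : ZMod 7) : P7) ((2 : ZMod 7) : P7) ((3 : ZMod 7) : P7)
        (fun h => absurd (OnePoint.coe_injective h) (by decide))
        (fun h => absurd (OnePoint.coe_injective h) (by decide))
        (fun h => absurd (OnePoint.coe_injective h) (by decide)) e3
        (by rw [(hφ 2 (by decide)).1, p2]; rfl)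
        (by rw [(hφ 3 (by decide)).1, h3])
      rw [this] at e1
      exact OnePoint.infty_ne_coe _ e1
    · rw [h3] at p2
      rw [h3, p2] at p6
      rw [h3, p6] at p4
      rw [h3, p4] at p5
      have hall : ∀ x : ZMod 7, x ≠ 0 → φ x = x⁻¹ := by
        intro x hx
        have : x = 1 ∨ x = 2 ∨ x = 3 ∨ x = 4 ∨ x = 5 ∨ x = 6 := by revert x; decide
        rcases this with rfl | rfl | rfl | rfl | rfl | rfl
        all_goals
          first | rw [hφ1] | rw [p2] | rw [h3] | rw [p4] | rw [p5] | rw [p6]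
          exact eq_inv_of_mul_eq_one_left (by decide)
      have : moebius invM = h := by
        ext x
        induction x using OnePoint.rec with
        | infty => rw [moebius_inv_infty, e1]
        | coe x =>
          by_cases hx : x = 0
          · rw [hx, moebius_inv_zero, e2]
          · rw [moebius_inv_coe x hx, (hφ x hx).1, hall x hx]
      rw [this]; exact hh
  apply le_antisymm
  · intro h hh
    obtain ⟨k, hk, f1, f2, f3⟩ := exists_reduce (H ⊓ moebius.range)
      (fun x => ⟨hT' x, ⟨_, rfl⟩⟩) (fun u hu => ⟨hS u hu, ⟨_, rfl⟩⟩) ⟨hI, ⟨_, rfl⟩⟩ h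
    have := huniq (k * h) (H.mul_mem hk.1 hh) _ _ _ (OnePoint.infty_ne_coe _)
      (OnePoint.infty_ne_coe _) (fun h => zero_ne_one (OnePoint.coe_injective h)) f1 f2 f3
    rw [mul_eq_one_iff_inv_eq] at this
    rw [← this]
    exact moebius.range.inv_mem hk.2
  · rintro _ ⟨g, rfl⟩
    obtain ⟨k, hk, f1, f2, f3⟩ := exists_reduce (H ⊓ moebius.range)
      (fun x => ⟨hT' x, ⟨_, rfl⟩⟩) (fun u hu => ⟨hS u hu, ⟨_, rfl⟩⟩) ⟨hI, ⟨_, rfl⟩⟩ (moebius g)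
    obtain ⟨hkH, ⟨g', rfl⟩⟩ := hk
    rw [← map_mul] at f1 f2 f3
    obtain ⟨r, hr⟩ := moebius_fix _ f1 f2 f3
    have : g' * g ∈ moebius.ker := by
      rw [moebius_ker, Matrix.GeneralLinearGroup.mem_center_iff_val_mem_range_scalar]
      exact ⟨r, hr.symm⟩
    rw [MonoidHom.mem_ker, map_mul, mul_eq_one_iff_inv_eq] at this
    rw [← this]
    exact H.inv_mem hkH


/-- A faithful group of order at least `336` on eight points in which the pointwise stabilizer of
some triple is trivial is isomorphic to `PGL₂(𝔽₇)`. By counting, it is sharply 3-transitive, so a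
point stabilizer has order `42` and a normal Sylow 7-subgroup, generated by `d` say. Labelling the
fixed point of `d` by `∞` and the other points by exponents of `d` turns `d` into a
translation of the projective line, and `eq_range_moebius` applies. -/
theorem pgl_of_sharp {G Ω : Type*} [Group G] [Finite G] [MulAction G Ω] [FaithfulSMul G Ω]
    (hΩ : Nat.card Ω = 8) (hG : 336 ≤ Nat.card G) (a b c : Ω) (hab : a ≠ b) (hac : a ≠ c)
    (hbc : b ≠ c) (hstab : ∀ g : G, g • a = a → g • b = b → g • c = c → g = 1) :
    Nonempty (G ≃* (GL (Fin 2) (ZMod 7) ⧸ Subgroup.center (GL (Fin 2) (ZMod 7)))) := by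
  classical
  have : Finite Ω := Nat.finite_of_card_ne_zero (by rw [hΩ]; norm_num)
  let := Fintype.ofFinite Ω
  let := Fintype.ofFinite G
  rw [Nat.card_eq_fintype_card] at hΩ hG
  -- the orbit map on ordered triples of distinct points
  let tri : {t : Ω × Ω × Ω // t.1 ≠ t.2.1 ∧ t.1 ≠ t.2.2 ∧ t.2.1 ≠ t.2.2} → (Fin 3 ↪ Ω) :=
    fun t => ⟨![t.1.1, t.1.2.1, t.1.2.2], by
      obtain ⟨⟨x, y, z⟩, h1, h2, h3⟩ := t
      intro i j hij
      fin_cases i <;> fin_cases j <;> simp_all [eq_comm]⟩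
  let om : G → (Fin 3 ↪ Ω) := fun g => tri ⟨(g • a, g • b, g • c), by simpa, by simpa, by simpa⟩
  have hom : Function.Injective om := by
    intro g g' h
    have h0 : g • a = g' • a := by simpa [om, tri] using DFunLike.congr_fun h 0
    have h1 : g • b = g' • b := by simpa [om, tri] using DFunLike.congr_fun h 1
    have h2 : g • c = g' • c := by simpa [om, tri] using DFunLike.congr_fun h 2
    have := hstab (g⁻¹ * g') (by rw [mul_smul, ← h0, inv_smul_smul])
      (by rw [mul_smul, ← h1, inv_smul_smul]) (by rw [mul_smul, ← h2, inv_smul_smul])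
    rwa [inv_mul_eq_one] at this
  have hcard : Fintype.card (Fin 3 ↪ Ω) = 336 := by
    rw [Fintype.card_embedding_eq, hΩ]; rfl
  have hG' : Fintype.card G = 336 :=
    le_antisymm (hcard ▸ Fintype.card_le_of_injective om hom) hG
  have hbij : Function.Bijective om :=
    (Fintype.bijective_iff_injective_and_card om).2 ⟨hom, by rw [hcard, hG']⟩
  have hex0 : ∀ x y z : Ω, x ≠ y → x ≠ z → y ≠ z → ∃ g : G, g • a = x ∧ g • b = y ∧ g • c = z := by
    intro x y z h1 h2 h3
    obtain ⟨g, hg⟩ := hbij.2 (tri ⟨(x, y, z), h1, h2, h3⟩)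
    exact ⟨g, by simpa [om, tri] using DFunLike.congr_fun hg 0,
      by simpa [om, tri] using DFunLike.congr_fun hg 1,
      by simpa [om, tri] using DFunLike.congr_fun hg 2⟩
  have huniq0 : ∀ g : G, ∀ x y z : Ω, x ≠ y → x ≠ z → y ≠ z → g • x = x → g • y = y → g • z = z →
      g = 1 := by
    intro g x y z h1 h2 h3 e1 e2 e3
    obtain ⟨k, rfl, rfl, rfl⟩ := hex0 x y z h1 h2 h3
    have := hstab (k⁻¹ * g * k) (by rw [mul_smul, mul_smul, e1, inv_smul_smul])
      (by rw [mul_smul, mul_smul, e2, inv_smul_smul])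
      (by rw [mul_smul, mul_smul, e3, inv_smul_smul])
    have h' : g = k * (k⁻¹ * g * k) * k⁻¹ := by group
    rw [h', this]; simp
  have hex2 : ∀ x y z w : Ω, x ≠ y → z ≠ w → ∃ g : G, g • x = z ∧ g • y = w := by
    have third : ∀ x y : Ω, ∃ z, x ≠ z ∧ y ≠ z := by
      intro x y
      have : ({x, y} : Finset Ω).card < Fintype.card Ω :=
        lt_of_le_of_lt (Finset.card_le_two) (by rw [hΩ]; norm_num)
      obtain ⟨z, hz⟩ := Finset.exists_mem_notMem_of_card_lt_card
        (s := {x, y}) (t := Finset.univ) (by simpa using this)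
      refine ⟨z, ?_, ?_⟩ <;> · rintro rfl; simp at hz
    intro x y z w hxy hzw
    obtain ⟨u, hu1, hu2⟩ := third x y
    obtain ⟨v, hv1, hv2⟩ := third z w
    obtain ⟨g, rfl, rfl, -⟩ := hex0 x y u hxy hu1 hu2
    obtain ⟨k, rfl, rfl, -⟩ := hex0 z w v hzw hv1 hv2
    exact ⟨k * g⁻¹, by rw [mul_smul, inv_smul_smul], by rw [mul_smul, inv_smul_smul]⟩
  -- the point stabilizer has order 42
  have hS : Nat.card (MulAction.stabilizer G a) = 42 := by
    have horb : MulAction.orbit G a = Set.univ := by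
      ext x
      simp only [Set.mem_univ, iff_true]
      by_cases hx : x = a
      · rw [hx]; exact MulAction.mem_orbit_self a
      · have : ∃ g : G, g • a = x := by
          obtain ⟨g, hg, -⟩ := hex2 a b x a hab hx
          exact ⟨g, hg⟩
        exact this
    have h1 := MulAction.card_orbit_mul_card_stabilizer_eq_card_group G a
    rw [hG'] at h1
    have h2 : Fintype.card (MulAction.orbit G a) = 8 := by
      rw [← Nat.card_eq_fintype_card, horb, Nat.card_univ, Nat.card_eq_fintype_card, hΩ]
    rw [h2] at h1
    rw [Nat.card_eq_fintype_card]
    omega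
  -- its Sylow 7-subgroup is normal of order 7
  let S : Sylow 7 (MulAction.stabilizer G a) := default
  have hScard : Nat.card S = 7 := by
    rw [Sylow.card_eq_multiplicity, hS]
    have : (42 : ℕ).factorization 7 = 1 := by
      rw [show (42 : ℕ) = 7 * 6 from rfl, Nat.factorization_mul (by norm_num) (by norm_num)]
      simp [Nat.Prime.factorization_self (by norm_num : Nat.Prime 7),
        Nat.factorization_eq_zero_of_not_dvd (by norm_num : ¬ 7 ∣ 6)]
    rw [this]; rfl
  have hSn : (S : Subgroup (MulAction.stabilizer G a)).Normal := by
    have h1 : Nat.card (Sylow 7 (MulAction.stabilizer G a)) ≡ 1 [MOD 7] := card_sylow_modEq_one 7 _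
    have h2 : Nat.card (Sylow 7 (MulAction.stabilizer G a)) ∣ 6 := by
      have h3 := S.card_dvd_index
      have h4 := (S : Subgroup (MulAction.stabilizer G a)).card_mul_index
      have h5 : Nat.card (S : Subgroup (MulAction.stabilizer G a)) = 7 := hScard
      rw [hS, h5] at h4
      have : (S : Subgroup (MulAction.stabilizer G a)).index = 6 := by omega
      rwa [this] at h3
    have h3 : Nat.card (Sylow 7 (MulAction.stabilizer G a)) = 1 := by
      have := Nat.le_of_dvd (by norm_num) h2
      unfold Nat.ModEq at h1
      omega
    have : Subsingleton (Sylow 7 (MulAction.stabilizer G a)) :=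
      (Nat.card_eq_one_iff_unique.1 h3).1
    exact Sylow.normal_of_subsingleton S
  have : IsCyclic S := isCyclic_of_prime_card (p := 7) hScard
  obtain ⟨s, hs⟩ := IsCyclic.exists_generator (α := S)
  let d : G := ((s : MulAction.stabilizer G a) : G)
  have hda : d • a = a := (s : MulAction.stabilizer G a).2
  have hd : orderOf d = 7 := by
    have h1 : orderOf s = 7 := by rw [orderOf_eq_card_of_forall_mem_zpowers hs, hScard]
    rw [← h1]
    simp [d]
  have hdn : ∀ g : G, g • a = a → ∃ k : ℤ, g * d * g⁻¹ = d ^ k := by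
    intro g hg
    have := hSn.conj_mem s.1 s.2 (⟨g, hg⟩ : MulAction.stabilizer G a)
    obtain ⟨k, hk⟩ := hs ⟨_, this⟩
    refine ⟨k, ?_⟩
    have h2 := congrArg (fun x : S => ((x : MulAction.stabilizer G a) : G)) hk
    simpa [d] using h2.symm
  -- if `d` fixed `b`, its seven powers would move `c` to seven different points among the six
  -- points other than `a` and `b`
  have hdb : d • b ≠ b := by
    intro h
    have hz : ∀ n : Fin 7, d ^ (n : ℕ) • a = a ∧ d ^ (n : ℕ) • b = b := by
      intro n
      exact ⟨MulAction.mem_stabilizer_iff.1 (Subgroup.pow_mem _ (MulAction.mem_stabilizer_iff.2 hda) _),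
        MulAction.mem_stabilizer_iff.1 (Subgroup.pow_mem _ (MulAction.mem_stabilizer_iff.2 h) _)⟩
    let f : Fin 7 → Ω := fun n => d ^ (n : ℕ) • c
    have hf : Function.Injective f := by
      intro m n hmn
      have h1 := hstab ((d ^ (m : ℕ))⁻¹ * d ^ (n : ℕ))
        (by rw [mul_smul, (hz n).1, inv_smul_eq_iff, (hz m).1])
        (by rw [mul_smul, (hz n).2, inv_smul_eq_iff, (hz m).2])
        (by rw [mul_smul, inv_smul_eq_iff]; exact hmn.symm)
      rw [inv_mul_eq_one] at h1
      exact Fin.ext (pow_injOn_Iio_orderOf (by simp [hd]) (by simp [hd]) h1)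
    have hsub : Finset.univ.image f ⊆ (Finset.univ.erase a).erase b := by
      intro x hx
      simp only [Finset.mem_image, Finset.mem_univ, true_and] at hx
      obtain ⟨n, rfl⟩ := hx
      simp only [Finset.mem_erase, Finset.mem_univ, and_true]
      constructor
      · intro h'
        have h2 : d ^ (n : ℕ) • c = d ^ (n : ℕ) • b := h'.trans (hz n).2.symm
        exact hbc (smul_left_cancel _ h2).symm
      · intro h'
        have h2 : d ^ (n : ℕ) • c = d ^ (n : ℕ) • a := h'.trans (hz n).1.symm
        exact hac (smul_left_cancel _ h2).symm
    have := Finset.card_le_card hsub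
    rw [Finset.card_image_of_injective _ hf, Finset.card_erase_of_mem (by simp [hab.symm]),
      Finset.card_erase_of_mem (by simp), Finset.card_univ, Finset.card_univ, hΩ] at this
    simp at this
  have hd1 : d ^ 7 = 1 := by rw [← hd]; exact pow_orderOf_eq_one d
  have hpw : ∀ m n : ℤ, (m : ZMod 7) = n → d ^ m = d ^ n := by
    intro m n h
    rw [ZMod.intCast_eq_intCast_iff] at h
    rw [zpow_eq_zpow_iff_modEq, hd]
    exact h
  let lab : P7 → Ω := fun x => x.elim a (fun j => d ^ (j.val : ℤ) • b)
  have hlab : Function.Injective lab := by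
    have h1 : ∀ j : ZMod 7, d ^ (j.val : ℤ) • b ≠ a := by
      intro j h
      have h2 : d ^ (j.val : ℤ) • a = a :=
        MulAction.mem_stabilizer_iff.1 (Subgroup.zpow_mem _ (MulAction.mem_stabilizer_iff.2 hda) _)
      have h3 : d ^ (j.val : ℤ) • b = d ^ (j.val : ℤ) • a := h.trans h2.symm
      exact hab (smul_left_cancel _ h3).symm
    have h2 : ∀ i j : ZMod 7, d ^ (i.val : ℤ) • b = d ^ (j.val : ℤ) • b → i = j := by
      intro i j h
      by_contra hij
      have h3 : d ^ ((i.val : ℤ) - j.val) • b = b := by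
        rw [sub_eq_neg_add, _root_.zpow_add, _root_.zpow_neg, mul_smul, h, inv_smul_smul]
      apply hdb
      have h4 : (i - j : ZMod 7) ≠ 0 := sub_ne_zero.2 hij
      have h5 : d = (d ^ ((i.val : ℤ) - j.val)) ^ (((i - j)⁻¹ : ZMod 7).val : ℤ) := by
        rw [← _root_.zpow_mul]
        nth_rewrite 1 [← zpow_one d]
        apply hpw
        push_cast
        rw [ZMod.natCast_zmod_val, ZMod.natCast_zmod_val, ZMod.natCast_zmod_val, mul_inv_cancel₀ h4]
      rw [h5]
      exact MulAction.mem_stabilizer_iff.1 (Subgroup.zpow_mem _ (MulAction.mem_stabilizer_iff.2 h3) _)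
    intro x y h
    induction x using OnePoint.rec with
    | infty =>
      induction y using OnePoint.rec with
      | infty => rfl
      | coe y => exact absurd h.symm (h1 y)
    | coe x =>
      induction y using OnePoint.rec with
      | infty => exact absurd h (h1 x)
      | coe y => exact congrArg _ (h2 x y h)
  let : Fintype P7 := inferInstanceAs (Fintype (Option (ZMod 7)))
  have hP7 : Fintype.card P7 = 8 := by
    have : Fintype.card (Option (ZMod 7)) = 8 := by rw [Fintype.card_option, ZMod.card]
    exact this
  let e : P7 ≃ Ω := Equiv.ofBijective lab
    ((Fintype.bijective_iff_injective_and_card lab).2 ⟨hlab, by rw [hΩ, hP7]⟩)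
  have hinf : e ∞ = a := rfl
  have hcoe : ∀ j : ZMod 7, e (j : P7) = d ^ (j.val : ℤ) • b := fun j => rfl
  let ψ : G →* Equiv.Perm P7 :=
    (e.symm.permCongrHom : Equiv.Perm Ω →* Equiv.Perm P7).comp (MulAction.toPermHom G Ω)
  have hψ : ∀ g x, e (ψ g x) = g • e x := by
    intro g x
    simp [ψ, Equiv.permCongrHom]
  have hψ' : ∀ g x y, ψ g x = y ↔ g • e x = e y := by
    intro g x y
    rw [← hψ, e.apply_eq_iff_eq]
  have hψinj : Function.Injective ψ := by
    rw [injective_iff_map_eq_one]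
    intro g hg
    apply FaithfulSMul.eq_of_smul_eq_smul (α := Ω)
    intro x
    rw [one_smul, ← e.apply_symm_apply x, ← hψ, hg]; rfl
  have hpd : ∀ k : ZMod 7, ∀ n : ℤ, (n : ZMod 7) = k → ψ (d ^ n) = moebius (trM k) := by
    intro k n hn
    ext x
    rw [hψ']
    induction x using OnePoint.rec with
    | infty =>
      rw [moebius_tr_infty, hinf]
      exact MulAction.mem_stabilizer_iff.1 (Subgroup.zpow_mem _ (MulAction.mem_stabilizer_iff.2 hda) _)
    | coe x =>
      rw [moebius_tr_coe, hcoe, hcoe, ← mul_smul, ← _root_.zpow_add]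
      congr 1
      apply hpw
      push_cast
      rw [ZMod.natCast_zmod_val, ZMod.natCast_zmod_val, hn, add_comm]
  have hrange : ψ.range = moebius.range := by
    apply eq_range_moebius
    · intro x y z h1 h2 h3
      have h01 : ((0 : ZMod 7) : P7) ≠ ((1 : ZMod 7) : P7) :=
        fun h => zero_ne_one (OnePoint.coe_injective h)
      obtain ⟨g, g1, g2, g3⟩ := hex0 (e ∞) (e ((0 : ZMod 7) : P7)) (e ((1 : ZMod 7) : P7))
        (e.injective.ne (OnePoint.infty_ne_coe _)) (e.injective.ne (OnePoint.infty_ne_coe _))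
        (e.injective.ne h01)
      obtain ⟨k, k1, k2, k3⟩ := hex0 (e x) (e y) (e z) (e.injective.ne h1) (e.injective.ne h2)
        (e.injective.ne h3)
      refine ⟨ψ (k * g⁻¹), ⟨_, rfl⟩, ?_, ?_, ?_⟩
      · rw [hψ', mul_smul, ← g1, inv_smul_smul, k1]
      · rw [hψ', mul_smul, ← g2, inv_smul_smul, k2]
      · rw [hψ', mul_smul, ← g3, inv_smul_smul, k3]
    · rintro _ ⟨g, rfl⟩ x y z h1 h2 h3 e1 e2 e3
      rw [hψ'] at e1 e2 e3
      rw [huniq0 g _ _ _ (e.injective.ne h1) (e.injective.ne h2) (e.injective.ne h3) e1 e2 e3,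
        map_one]
    · exact ⟨d, by rw [← hpd 1 1 (by simp), zpow_one]⟩
    · rintro _ ⟨g, rfl⟩ hg
      rw [hψ', hinf] at hg
      obtain ⟨k, hk⟩ := hdn g hg
      refine ⟨(k : ZMod 7), fun x => ?_⟩
      rw [← hpd 1 1 (by simp), ← hpd k k rfl, zpow_one, ← hk, ← Equiv.Perm.mul_apply,
        ← Equiv.Perm.mul_apply, ← map_mul, ← map_mul, inv_mul_cancel_right]
  exact ⟨((MonoidHom.ofInjective hψinj).trans (MulEquiv.subgroupCongr hrange)).trans
    ((QuotientGroup.quotientMulEquivOfEq moebius_ker.symm).trans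
      (QuotientGroup.quotientKerEquivRange moebius)).symm⟩

end Group

/-! ### Computation with polynomials over ℤ[√2] -/
section Reflection

/-- Polynomials over `ℤ[√2]` as lists of coefficients, lowest degree first; the pair `(a, b)` stands
for `a + b√2`. Trailing zeros are allowed, so equality of polynomials is tested by `isZero` on the
difference. -/
abbrev QPoly : Type := List (ℤ × ℤ)

namespace QPoly

/-- Multiplication of a polynomial by a constant of `ℤ[√2]`. -/
def smulc (c : ℤ × ℤ) : QPoly → QPoly
  | [] => []
  | d :: l => (c.1 * d.1 + 2 * (c.2 * d.2), c.1 * d.2 + c.2 * d.1) :: smulc c l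

/-- Sum of polynomials. -/
def add : QPoly → QPoly → QPoly
  | [], m => m
  | c :: l, [] => c :: l
  | c :: l, d :: m => (c.1 + d.1, c.2 + d.2) :: add l m

/-- Product of polynomials. -/
def mul : QPoly → QPoly → QPoly
  | [], _ => []
  | c :: l, m => add (smulc c m) ((0, 0) :: mul l m)

/-- Negative of a polynomial. -/
def neg (l : QPoly) : QPoly := smulc (-1, 0) l

/-- Difference of polynomials. -/
def sub (l m : QPoly) : QPoly := add l (neg m)

/-- Powers of a polynomial. -/
def pow (l : QPoly) : ℕ → QPoly
  | 0 => [(1, 0)]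
  | n + 1 => mul l (pow l n)

/-- Test whether all coefficients vanish. -/
def isZero : QPoly → Bool
  | [] => true
  | c :: l => (c.1 == 0 && c.2 == 0) && isZero l

/-- Value of a polynomial at an element of `ℤ[√2]`, by the Horner scheme. -/
def evalc (c : ℤ × ℤ) : QPoly → ℤ × ℤ
  | [] => (0, 0)
  | d :: l =>
    let v := evalc c l
    (d.1 + (c.1 * v.1 + 2 * (c.2 * v.2)), d.2 + (c.1 * v.2 + c.2 * v.1))

/-- The sum of `|a| + 2|b|` over all coefficients `a + b√2`: a submultiplicative bound for the size
of the coefficients. -/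
def nrm : QPoly → ℕ
  | [] => 0
  | c :: l => (c.1.natAbs + 2 * c.2.natAbs) + nrm l

lemma nrm_add (l m : QPoly) : nrm (add l m) ≤ nrm l + nrm m := by
  induction l generalizing m with
  | nil => simp [add, nrm]
  | cons c l ih =>
    cases m with
    | nil => simp [add, nrm]
    | cons d m =>
      have := ih m
      have h1 := Int.natAbs_add_le c.1 d.1
      have h2 := Int.natAbs_add_le c.2 d.2
      simp only [add, nrm]
      omega

lemma nrm_smulc (c : ℤ × ℤ) (l : QPoly) :
    nrm (smulc c l) ≤ (c.1.natAbs + 2 * c.2.natAbs) * nrm l := by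
  induction l with
  | nil => simp [smulc, nrm]
  | cons d l ih =>
    have h1 := Int.natAbs_add_le (c.1 * d.1) (2 * (c.2 * d.2))
    have h2 := Int.natAbs_add_le (c.1 * d.2) (c.2 * d.1)
    simp only [Int.natAbs_mul, Int.reduceAbs] at h1 h2
    simp only [smulc, nrm]
    nlinarith [Nat.zero_le (c.2.natAbs * d.2.natAbs)]

lemma nrm_mul (l m : QPoly) : nrm (mul l m) ≤ nrm l * nrm m := by
  induction l with
  | nil => simp [mul, nrm]
  | cons c l ih =>
    have h1 := nrm_add (smulc c m) ((0, 0) :: mul l m)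
    have h2 := nrm_smulc c m
    simp only [mul, nrm] at h1 ⊢
    simp only [Int.natAbs_zero] at h1
    nlinarith

/-- Multiplication in `ℤ[√2]`. -/
def zmul (c d : ℤ × ℤ) : ℤ × ℤ := (c.1 * d.1 + 2 * (c.2 * d.2), c.1 * d.2 + c.2 * d.1)

lemma evalc_add (a : ℤ × ℤ) (l m : QPoly) : evalc a (add l m) = evalc a l + evalc a m := by
  induction l generalizing m with
  | nil => simp [add, evalc]
  | cons c l ih =>
    cases m with
    | nil => simp [add, evalc]
    | cons d m =>
      simp only [add, evalc, ih]
      ext <;> simp <;> ring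

lemma evalc_smulc (a c : ℤ × ℤ) (l : QPoly) : evalc a (smulc c l) = zmul c (evalc a l) := by
  induction l with
  | nil => simp [smulc, evalc, zmul]
  | cons d l ih =>
    simp only [smulc, evalc, ih, zmul]
    ext <;> simp <;> ring

lemma evalc_mul (a : ℤ × ℤ) (l m : QPoly) : evalc a (mul l m) = zmul (evalc a l) (evalc a m) := by
  induction l with
  | nil => simp [mul, evalc, zmul]
  | cons c l ih =>
    simp only [mul, evalc_add, evalc_smulc, evalc, ih, zmul]
    ext <;> simp <;> ring

/-- Kronecker substitution: a polynomial whose coefficients are smaller than the integer `B` and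
which vanishes at `B` is zero. -/
lemma isZero_of_evalc (B : ℤ) (l : QPoly) (hn : (nrm l : ℤ) < B) (h0 : evalc (B, 0) l = (0, 0)) :
    isZero l = true := by
  induction l with
  | nil => rfl
  | cons c l ih =>
    simp only [nrm] at hn
    push_cast at hn
    simp only [evalc, Prod.mk.injEq, zero_mul, mul_zero, add_zero] at h0
    have key : ∀ u v : ℤ, u + B * v = 0 → |u| < B → u = 0 ∧ v = 0 := by
      intro u v h1 h2
      have h3 : u = 0 := Int.eq_zero_of_abs_lt_dvd ⟨-v, by linarith⟩ h2
      have hB : B ≠ 0 := by have := abs_nonneg u; omega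
      subst h3
      exact ⟨rfl, by simpa [hB] using h1⟩
    have h5 : (0 : ℤ) ≤ |c.1| := abs_nonneg _
    have h6 : (0 : ℤ) ≤ |c.2| := abs_nonneg _
    obtain ⟨h1, h2⟩ := key _ _ h0.1 (by omega)
    obtain ⟨h3, h4⟩ := key _ _ h0.2 (by omega)
    simp only [isZero, h1, h3]
    simpa using ih (by omega) (Prod.ext h2 h4)

/-- What Kronecker substitution needs to know about a polynomial. -/
structure Cert where
  /-- the value at the substituted integer -/
  v : ℤ × ℤ
  /-- a bound for `nrm` -/
  n : ℕ

namespace Cert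

/-- Certificate of a sum. -/
def add (c d : Cert) : Cert := ⟨(c.v.1 + d.v.1, c.v.2 + d.v.2), c.n + d.n⟩

/-- Certificate of a product. -/
def mul (c d : Cert) : Cert := ⟨zmul c.v d.v, c.n * d.n⟩

/-- Certificate of a negative. -/
def neg (c : Cert) : Cert := mul ⟨(-1, 0), 1⟩ c

/-- The exact certificate of a given list, for substitution of `B`. -/
def of (B : ℤ) (l : QPoly) : Cert := ⟨evalc (B, 0) l, nrm l⟩

/-- `c` is a correct certificate for `l` at `B`. -/
def Rel (B : ℤ) (l : QPoly) (c : Cert) : Prop := evalc (B, 0) l = c.v ∧ nrm l ≤ c.n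

lemma rel_of (B : ℤ) (l : QPoly) : Rel B l (of B l) := ⟨rfl, le_rfl⟩

lemma Rel.add {B : ℤ} {l m : QPoly} {c d : Cert} (h₁ : Rel B l c) (h₂ : Rel B m d) :
    Rel B (QPoly.add l m) (c.add d) :=
  ⟨by rw [evalc_add, h₁.1, h₂.1]; rfl, (nrm_add l m).trans (add_le_add h₁.2 h₂.2)⟩

lemma Rel.mul {B : ℤ} {l m : QPoly} {c d : Cert} (h₁ : Rel B l c) (h₂ : Rel B m d) :
    Rel B (QPoly.mul l m) (c.mul d) :=
  ⟨by rw [evalc_mul, h₁.1, h₂.1]; rfl, (nrm_mul l m).trans (Nat.mul_le_mul h₁.2 h₂.2)⟩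

lemma Rel.neg {B : ℤ} {l : QPoly} {c : Cert} (h₁ : Rel B l c) : Rel B (QPoly.neg l) c.neg :=
  ⟨by rw [QPoly.neg, evalc_smulc, h₁.1]; rfl,
    (nrm_smulc _ l).trans (by simpa [Cert.neg, Cert.mul] using h₁.2)⟩

lemma Rel.sub {B : ℤ} {l m : QPoly} {c d : Cert} (h₁ : Rel B l c) (h₂ : Rel B m d) :
    Rel B (QPoly.sub l m) (c.add d.neg) := h₁.add h₂.neg

/-- The certificate proves that the polynomial vanishes: the value is zero and the bound is below `B`. -/
def isZero (B : ℤ) (c : Cert) : Bool :=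
  decide (c.v.1 = 0) && decide (c.v.2 = 0) && decide ((c.n : ℤ) < B)

lemma Rel.isZero {B : ℤ} {l : QPoly} {c : Cert} (h₁ : Rel B l c) (h₂ : c.isZero B = true) :
    QPoly.isZero l = true := by
  simp only [Cert.isZero, Bool.and_eq_true, decide_eq_true_eq] at h₂
  refine isZero_of_evalc B l (lt_of_le_of_lt (by exact_mod_cast h₁.2) h₂.2) ?_
  rw [h₁.1]
  exact Prod.ext h₂.1.1 h₂.1.2

end Cert

section ev
variable {R : Type*} [CommRing R] (h x : R)

/-- Value of a polynomial at an element `x` of a commutative ring in which `h` plays the role of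
`√2`. -/
def ev : QPoly → R
  | [] => 0
  | c :: l => ((c.1 : R) + c.2 * h) + x * ev l

@[simp] lemma ev_nil : ev h x [] = 0 := rfl
@[simp] lemma ev_cons (c l) : ev h x (c :: l) = ((c.1 : R) + c.2 * h) + x * ev h x l := rfl

lemma ev_add (l m : QPoly) : ev h x (add l m) = ev h x l + ev h x m := by
  induction l generalizing m with
  | nil => simp [add]
  | cons c l ih =>
    cases m with
    | nil => simp [add]
    | cons d m => simp only [add, ev_cons, ih]; push_cast; ring

variable {h}

lemma ev_smulc (hh : h * h = 2) (c : ℤ × ℤ) (l : QPoly) : ev h x (smulc c l) = (c.1 + c.2 * h) * ev h x l := by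
  induction l with
  | nil => simp [smulc]
  | cons d l ih =>
    simp only [smulc, ev_cons, ih]; push_cast
    linear_combination (-(c.2 : R) * d.2) * hh

lemma ev_neg (hh : h * h = 2) (l : QPoly) : ev h x (neg l) = - ev h x l := by
  rw [neg, ev_smulc x hh]; push_cast; ring

lemma ev_sub (hh : h * h = 2) (l m : QPoly) : ev h x (sub l m) = ev h x l - ev h x m := by
  rw [sub, ev_add, ev_neg x hh, sub_eq_add_neg]

lemma ev_mul (hh : h * h = 2) (l m : QPoly) : ev h x (mul l m) = ev h x l * ev h x m := by
  induction l with
  | nil => simp [mul]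
  | cons c l ih => simp only [mul, ev_add, ev_smulc x hh, ev_cons, ih]; push_cast; ring

lemma ev_pow (hh : h * h = 2) (l : QPoly) (n : ℕ) : ev h x (pow l n) = ev h x l ^ n := by
  induction n with
  | zero => simp [pow]
  | succ n ih => rw [pow, ev_mul x hh, ih, pow_succ']

lemma ev_evalc (hh : h * h = 2) (c : ℤ × ℤ) (l : QPoly) :
    ev h (c.1 + c.2 * h) l = (evalc c l).1 + (evalc c l).2 * h := by
  induction l with
  | nil => simp [evalc]
  | cons d l ih =>
    simp only [evalc, ev_cons, ih]; push_cast
    linear_combination ((c.2 : R) * (evalc c l).2) * hh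

lemma ev_isZero (l : QPoly) (hl : isZero l = true) : ev h x l = 0 := by
  induction l with
  | nil => rfl
  | cons c l ih =>
    simp only [isZero, Bool.and_eq_true, beq_iff_eq] at hl
    simp [hl.1.1, hl.1.2, ih hl.2]

lemma ev_eq (hh : h * h = 2) (l m : QPoly) (hl : isZero (sub l m) = true) : ev h x l = ev h x m := by
  have := ev_isZero (h := h) x _ hl
  rwa [ev_sub x hh, sub_eq_zero] at this

end ev
end QPoly

/-! ### The explicit polynomials -/

/-- `A`: the two roots `Z` attached to `x` have sum `A / Q`. -/
def lA : QPoly :=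
  [(18, 12), (-126, -88), (46, 28), (-2, 0)]

/-- `Q = (x² - 1)(x - 3 - 2√2)`, the common denominator. -/
def lQ : QPoly :=
  [(3, 2), (-1, 0), (-3, -2), (1, 0)]

/-- `B`: the two roots `Z` attached to `x` have product `B / Q²`. -/
def lB : QPoly :=
  [(1505, 1064), (-6240, -4412), (14243, 10068), (-9378, -6616), (2871, 2000), (-508, -364),
   (69, 52), (-2, 0)]

/-- `N`: the polynomial of degree `28` with `8⁸ t = N(x) / Q(x)⁸`. -/
def lN : QPoly :=
  [(20209649397264, 14290380134208), (-571615205368320, -404192987945280), (6697116190278432,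
   4735576272540096), (-43272446090737664, -30598240069289920), (177054926230907312,
   125196738980358528), (-506589791652243456, -358213076957181312), (1071253002336852288,
   757490262318832256), (-1733340549215630336, -1225656856455958144), (2190784416650262672,
   1549118517131090880), (-2191714684554398208, -1549776315874148800), (1749495267802568416,
   1237079967515978048), (-1120419115152491520, -792255954093456192), (577375298897630128,
   408265989137375488), (-239384643569049600, -169270504776788224), (79579145694554496,
   56270953559977728), (-21074035576784896, -14901593463351040), (4413667323903408,
   3120934095436480), (-730367690872320, -516447947286720), (97548502462176, 68977207863360),
   (-11136304447488, -7874556371520), (1133844693648, 801749228928), (-97283880960,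
   -68790077824), (7031748928, 4972187264), (-499172352, -352969344), (25107376, 17754688),
   (-1211904, -857152), (47904, 33984), (-1024, -704), (16, 0)]

/-- `G`, the square part of `A² - 4B = D G²`. -/
def lG : QPoly :=
  [(3, 2), (0, -2), (1, 0)]

/-- `D`, the part of `A² - 4B = D G²` of odd degree. -/
def lD : QPoly :=
  [(-160, -112), (328, 224), (-272, -176), (8, 0)]

/-- Leading coefficient of `Φ(x, y) = E₀ y³ - E₁ y² + E₂ y - E₃`. -/
def lE0 : QPoly :=
  [(1, 0), (2, 0), (1, 0)]

/-- `E₁` in `Φ(x, y) = E₀ y³ - E₁ y² + E₂ y - E₃`. -/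
def lE1 : QPoly :=
  [(34, 22), (-45, -28), (16, 14), (-1, 0)]

/-- `E₂` in `Φ(x, y) = E₀ y³ - E₁ y² + E₂ y - E₃`. -/
def lE2 : QPoly :=
  [(41, 28), (-108, -72), (45, 28), (2, 0)]

/-- `E₃` in `Φ(x, y) = E₀ y³ - E₁ y² + E₂ y - E₃`. -/
def lE3 : QPoly :=
  [(20, 14), (-41, -28), (34, 22), (-1, 0)]

/-- Square part of the discriminant of `Φ(x, ·)`, up to a constant. -/
def lGG : QPoly :=
  [(-11, -8), (4, 4), (10, 8), (-4, -4), (1, 0)]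

/-- Constant coefficient of `yhat` as a polynomial in `y`. -/
def lY0 : QPoly :=
  [(-20, -14), (41, 28), (-34, -22), (1, 0)]

/-- Linear coefficient of `yhat` as a polynomial in `y`. -/
def lY1 : QPoly :=
  [(-27, -18), (43, 28), (-25, -18), (1, 0)]

/-- Quadratic coefficient of `yhat` as a polynomial in `y`. -/
def lY2 : QPoly :=
  [(1, 0), (2, 0), (1, 0)]


/-- Polynomials in `y` whose coefficients are polynomials in `x`, lowest degree in `y` first. -/
abbrev QPoly2 : Type := List QPoly

namespace QPoly2
open QPoly

/-- Multiplication by a polynomial in `x`. -/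
def smulc (c : QPoly) : QPoly2 → QPoly2
  | [] => []
  | d :: l => mul c d :: smulc c l

/-- Sum of polynomials in two variables. -/
def add : QPoly2 → QPoly2 → QPoly2
  | [], m => m
  | c :: l, [] => c :: l
  | c :: l, d :: m => QPoly.add c d :: add l m

/-- Product of polynomials in two variables. -/
def mul : QPoly2 → QPoly2 → QPoly2
  | [], _ => []
  | c :: l, m => add (smulc c m) ([] :: mul l m)

/-- Difference of polynomials in two variables. -/
def sub (l m : QPoly2) : QPoly2 := add l (smulc [(-1, 0)] m)

/-- A polynomial in one variable, regarded as a polynomial in `y` with constant coefficients. -/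
def const : QPoly → QPoly2
  | [] => []
  | c :: l => [c] :: const l

/-- A pseudo-remainder `c₂ y² + c₁ y + c₀` modulo `Φ(x, y)`, together with the power `e` of the leading
coefficient `E₀` by which the dividend was multiplied. -/
structure Red where
  e : QPoly
  c₂ : QPoly
  c₁ : QPoly
  c₀ : QPoly

/-- Pseudo-remainder modulo `Φ(x, y)`, by the Horner scheme; see `red_spec`. -/
def red : QPoly2 → Red
  | [] => ⟨[(1, 0)], [], [], []⟩
  | p :: l =>
    let v := red l
    let e := QPoly.mul lE0 v.e
    ⟨e, QPoly.add (QPoly.mul v.c₂ lE1) (QPoly.mul lE0 v.c₁),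
      QPoly.sub (QPoly.mul lE0 v.c₀) (QPoly.mul v.c₂ lE2),
      QPoly.add (QPoly.mul v.c₂ lE3) (QPoly.mul e p)⟩

/-- Certificates for the components of a `Red`. -/
structure RedCert where
  e : Cert
  c₂ : Cert
  c₁ : Cert
  c₀ : Cert

/-- The computation `red`, carried out on certificates at `B` only. -/
def redCert (B : ℤ) : QPoly2 → RedCert
  | [] => ⟨.of B [(1, 0)], .of B [], .of B [], .of B []⟩
  | p :: l =>
    let v := redCert B l
    let e := (Cert.of B lE0).mul v.e
    ⟨e, (v.c₂.mul (.of B lE1)).add ((Cert.of B lE0).mul v.c₁),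
      ((Cert.of B lE0).mul v.c₀).add (v.c₂.mul (.of B lE2)).neg,
      (v.c₂.mul (.of B lE3)).add (e.mul (.of B p))⟩

lemma redCert_rel (B : ℤ) (l : QPoly2) :
    Cert.Rel B (red l).e (redCert B l).e ∧ Cert.Rel B (red l).c₂ (redCert B l).c₂ ∧
      Cert.Rel B (red l).c₁ (redCert B l).c₁ ∧ Cert.Rel B (red l).c₀ (redCert B l).c₀ := by
  induction l with
  | nil => exact ⟨Cert.rel_of _ _, Cert.rel_of _ _, Cert.rel_of _ _, Cert.rel_of _ _⟩
  | cons p l ih =>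
    obtain ⟨he, h2, h1, h0⟩ := ih
    have he' := (Cert.rel_of B lE0).mul he
    exact ⟨he', (h2.mul (Cert.rel_of B lE1)).add ((Cert.rel_of B lE0).mul h1),
      ((Cert.rel_of B lE0).mul h0).sub (h2.mul (Cert.rel_of B lE2)),
      (h2.mul (Cert.rel_of B lE3)).add (he'.mul (Cert.rel_of B p))⟩

/-- Test, by Kronecker substitution, that the pseudo-remainder modulo `Φ(x, y)` vanishes. -/
def redZero (B : ℤ) (l : QPoly2) : Bool :=
  let v := redCert B l
  v.c₂.isZero B && v.c₁.isZero B && v.c₀.isZero B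

section ev
variable {R : Type*} [CommRing R] (h x y : R)

/-- Value at `(x, y)`, with `h` in the role of `√2`. -/
def ev : QPoly2 → R
  | [] => 0
  | c :: l => QPoly.ev h x c + y * ev l

@[simp] lemma ev_nil : ev h x y [] = 0 := rfl
@[simp] lemma ev_cons (c l) : ev h x y (c :: l) = QPoly.ev h x c + y * ev h x y l := rfl

lemma ev_add (l m : QPoly2) : ev h x y (add l m) = ev h x y l + ev h x y m := by
  induction l generalizing m with
  | nil => simp [add]
  | cons c l ih =>
    cases m with
    | nil => simp [add]
    | cons d m => simp only [add, ev_cons, QPoly.ev_add, ih]; ring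

lemma ev_const (l : QPoly) : ev h x y (const l) = QPoly.ev h y l := by
  induction l with
  | nil => rfl
  | cons c l ih => simp [const, ih]

variable {h}

lemma ev_smulc (hh : h * h = 2) (c : QPoly) (l : QPoly2) :
    ev h x y (smulc c l) = QPoly.ev h x c * ev h x y l := by
  induction l with
  | nil => simp [smulc]
  | cons d l ih => simp only [smulc, ev_cons, QPoly.ev_mul x hh, ih]; ring

lemma ev_sub (hh : h * h = 2) (l m : QPoly2) :
    ev h x y (sub l m) = ev h x y l - ev h x y m := by
  simp only [sub, ev_add, ev_smulc x y hh, QPoly.ev_cons, QPoly.ev_nil]; push_cast; ring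

lemma ev_mul (hh : h * h = 2) (l m : QPoly2) :
    ev h x y (mul l m) = ev h x y l * ev h x y m := by
  induction l with
  | nil => simp [mul]
  | cons c l ih => simp only [mul, ev_add, ev_smulc x y hh, ev_cons, ih, QPoly.ev_nil]; ring

end ev
end QPoly2

/-! ### The symmetric correspondence -/
section Curve
variable {R : Type*} [CommRing R] (h : R)

/-- The correspondence `Φ(x, y) = E₀(x) y³ - E₁(x) y² + E₂(x) y - E₃(x)`, which is symmetric in `x` and
`y`. -/
def phi (x y : R) : R :=
  QPoly.ev h x lE0 * y ^ 3 - QPoly.ev h x lE1 * y ^ 2 + QPoly.ev h x lE2 * y - QPoly.ev h x lE3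

lemma phi_symm (x y : R) : phi h x y = phi h y x := by
  simp only [phi, lE0, lE1, lE2, lE3, QPoly.ev_cons, QPoly.ev_nil]; push_cast; ring

/-- A polynomial whose square is `D(x) · (-2y)` up to square factors when `Φ(x, y) = 0`. -/
def yhat (x y : R) : R :=
  QPoly.ev h x lY0 + QPoly.ev h x lY1 * y + QPoly.ev h x lY2 * y ^ 2

variable {h}

lemma red_spec (hh : h * h = 2) (x y : R) (hp : phi h x y = 0) (l : QPoly2) :
    QPoly.ev h x (QPoly2.red l).e = QPoly.ev h x lE0 ^ l.length ∧
    QPoly.ev h x lE0 ^ l.length * QPoly2.ev h x y l =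
      QPoly.ev h x (QPoly2.red l).c₂ * y ^ 2 + QPoly.ev h x (QPoly2.red l).c₁ * y +
        QPoly.ev h x (QPoly2.red l).c₀ := by
  induction l with
  | nil => simp [QPoly2.red]
  | cons p l ih =>
    obtain ⟨h1, h2⟩ := ih
    simp only [QPoly2.red, QPoly.ev_mul x hh, QPoly.ev_add, QPoly.ev_sub x hh, h1,
      List.length_cons, QPoly2.ev_cons]
    refine ⟨by ring, ?_⟩
    unfold phi at hp
    rw [pow_succ]
    linear_combination (QPoly.ev h x lE0 * y) * h2 + QPoly.ev h x (QPoly2.red l).c₂ * hp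

lemma ev2_eq_zero [IsDomain R] (hh : h * h = 2) (x y : R) (hp : phi h x y = 0)
    (he : QPoly.ev h x lE0 ≠ 0) (B : ℤ) (l : QPoly2) (hl : QPoly2.redZero B l = true) :
    QPoly2.ev h x y l = 0 := by
  simp only [QPoly2.redZero, Bool.and_eq_true] at hl
  obtain ⟨-, h2, h1, h0⟩ := QPoly2.redCert_rel B l
  have := (red_spec hh x y hp l).2
  rw [QPoly.ev_isZero x _ (h2.isZero hl.1.1), QPoly.ev_isZero x _ (h1.isZero hl.1.2),
    QPoly.ev_isZero x _ (h0.isZero hl.2)] at this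
  simpa [he] using this

/-- The function `N / Q⁸` takes the same value at `x` and `y` if `Φ(x, y) = 0`. -/
lemma T_invariant [IsDomain R] (hh : h * h = 2) (x y : R) (hp : phi h x y = 0)
    (he : QPoly.ev h x lE0 ≠ 0) :
    QPoly.ev h y lN * QPoly.ev h x lQ ^ 8 = QPoly.ev h x lN * QPoly.ev h y lQ ^ 8 := by
  have := ev2_eq_zero hh x y hp he (10 ^ 300)
    (QPoly2.sub (QPoly2.smulc (QPoly.pow lQ 8) (QPoly2.const lN))
      (QPoly2.smulc lN (QPoly2.const (QPoly.pow lQ 8)))) (by decide +kernel)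
  simp only [QPoly2.ev_sub x y hh, QPoly2.ev_smulc x y hh, QPoly2.ev_const, QPoly.ev_pow _ hh] at this
  linear_combination this

lemma yhat_sq [IsDomain R] (hh : h * h = 2) (x y : R) (hp : phi h x y = 0)
    (he : QPoly.ev h x lE0 ≠ 0) :
    yhat h x y ^ 2 = (2 + h) ^ 2 * QPoly.ev h x lD * (-2 * y) * (x - 1) ^ 2 := by
  have := ev2_eq_zero hh x y hp he (10 ^ 300)
    (QPoly2.sub (QPoly2.mul [lY0, lY1, lY2] [lY0, lY1, lY2])
      [[], QPoly.mul lD (QPoly.mul (QPoly.pow [(2, 1)] 2)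
        (QPoly.mul [(-2, 0)] (QPoly.pow [(-1, 0), (1, 0)] 2)))]) (by decide +kernel)
  simp only [QPoly2.ev_sub x y hh, QPoly2.ev_mul x y hh, QPoly2.ev_cons, QPoly2.ev_nil,
    QPoly.ev_mul _ hh, QPoly.ev_pow _ hh, QPoly.ev_nil] at this
  simp only [QPoly.ev_cons, QPoly.ev_nil (h := h) (x := x)] at this
  push_cast at this
  unfold yhat
  simp only [lY0, lY1, lY2, lD, QPoly.ev_cons, QPoly.ev_nil] at this ⊢
  push_cast at this ⊢
  linear_combination this

lemma disc_formula (hh : h * h = 2) (x : R) :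
    QPoly.ev h x lA ^ 2 - 4 * QPoly.ev h x lB = QPoly.ev h x lD * QPoly.ev h x lG ^ 2 := by
  have := QPoly.ev_eq x hh (QPoly.sub (QPoly.pow lA 2) (QPoly.mul [(4, 0)] lB))
    (QPoly.mul lD (QPoly.pow lG 2)) (by decide +kernel)
  simp only [QPoly.ev_sub _ hh, QPoly.ev_mul _ hh, QPoly.ev_pow _ hh] at this
  simpa using this

/-- The left-hand side is the discriminant of the cubic `Φ(x, ·)`. -/
lemma disc_phi (hh : h * h = 2) (x : R) :
    QPoly.ev h x lE1 ^ 2 * QPoly.ev h x lE2 ^ 2 - 4 * QPoly.ev h x lE0 * QPoly.ev h x lE2 ^ 3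
      - 4 * QPoly.ev h x lE1 ^ 3 * QPoly.ev h x lE3
      - 27 * QPoly.ev h x lE0 ^ 2 * QPoly.ev h x lE3 ^ 2
      + 18 * QPoly.ev h x lE0 * QPoly.ev h x lE1 * QPoly.ev h x lE2 * QPoly.ev h x lE3 =
    (4 * (1 + h)) ^ 2 * QPoly.ev h x lGG ^ 2 * QPoly.ev h x lD := by
  have := QPoly.ev_eq x hh
    (QPoly.add (QPoly.sub (QPoly.sub (QPoly.sub (QPoly.mul (QPoly.pow lE1 2) (QPoly.pow lE2 2))
      (QPoly.mul [(4, 0)] (QPoly.mul lE0 (QPoly.pow lE2 3))))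
      (QPoly.mul [(4, 0)] (QPoly.mul (QPoly.pow lE1 3) lE3)))
      (QPoly.mul [(27, 0)] (QPoly.mul (QPoly.pow lE0 2) (QPoly.pow lE3 2))))
      (QPoly.mul [(18, 0)] (QPoly.mul lE0 (QPoly.mul lE1 (QPoly.mul lE2 lE3)))))
    (QPoly.mul (QPoly.pow [(4, 4)] 2) (QPoly.mul (QPoly.pow lGG 2) lD)) (by decide +kernel)
  simp only [QPoly.ev_sub _ hh, QPoly.ev_mul _ hh, QPoly.ev_pow _ hh, QPoly.ev_add] at this
  simp only [QPoly.ev_cons (l := []), QPoly.ev_nil] at this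
  push_cast at this
  linear_combination this

end Curve

/-! ### The quadratic factor of the octic -/
section Curve2
variable {R : Type*} [CommRing R] {h : R}
open QPoly

/-- A root `ξ` of `Z² - A Z + B` satisfies the octic, homogenized by `Q`, with right-hand side `N`. The
proof expands the octic modulo this quadratic. -/
lemma octic_eq (hh : h * h = 2) (x ξ : R) (hξ : ξ ^ 2 = ev h x lA * ξ - ev h x lB) :
    (ξ ^ 2 + (25 + 22 * h) * ev h x lQ ^ 2) ^ 3 *
      (ξ ^ 2 + 8 * ev h x lQ * ξ + (97 + 54 * h) * ev h x lQ ^ 2) = ev h x lN := by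
  let q2 := QPoly.pow lQ 2
  let a0 := sub (mul [(25, 22)] q2) lB
  let b0 := sub (mul [(97, 54)] q2) lB
  let b1 := add lA (mul [(8, 0)] lQ)
  let s0 := sub (mul a0 a0) (mul lA (mul lA lB))
  let s1 := add (mul [(2, 0)] (mul a0 lA)) (mul lA (mul lA lA))
  let c0 := sub (mul a0 s0) (mul lA (mul s1 lB))
  let c1 := add (add (mul a0 s1) (mul lA s0)) (mul lA (mul s1 lA))
  have r0 := ev_eq x hh (sub (mul c0 b0) (mul c1 (mul b1 lB))) lN (by decide +kernel)
  have r1 := ev_eq x hh (add (add (mul c0 b1) (mul c1 b0)) (mul c1 (mul b1 lA))) []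
    (by decide +kernel)
  have k0 : ev h x a0 = (25 + 22 * h) * ev h x lQ ^ 2 - ev h x lB := by
    simp only [a0, q2, ev_sub x hh, ev_mul x hh, ev_pow x hh, ev_cons (l := []), ev_nil]
    push_cast; ring
  have k1 : ev h x b0 = (97 + 54 * h) * ev h x lQ ^ 2 - ev h x lB := by
    simp only [b0, q2, ev_sub x hh, ev_mul x hh, ev_pow x hh, ev_cons (l := []), ev_nil]
    push_cast; ring
  have k2 : ev h x b1 = ev h x lA + 8 * ev h x lQ := by
    simp only [b1, ev_add, ev_mul x hh, ev_cons (l := []), ev_nil]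
    push_cast; ring
  have k3 : ev h x s0 = ev h x a0 ^ 2 - ev h x lA ^ 2 * ev h x lB := by
    simp only [s0, ev_sub x hh, ev_mul x hh]; ring
  have k4 : ev h x s1 = 2 * ev h x a0 * ev h x lA + ev h x lA ^ 3 := by
    simp only [s1, ev_add, ev_mul x hh, ev_cons (l := []), ev_nil]
    push_cast; ring
  have k5 : ev h x c0 = ev h x a0 * ev h x s0 - ev h x lA * ev h x s1 * ev h x lB := by
    simp only [c0, ev_sub x hh, ev_mul x hh]; ring
  have k6 : ev h x c1 = ev h x a0 * ev h x s1 + ev h x lA * ev h x s0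
      + ev h x lA ^ 2 * ev h x s1 := by
    simp only [c1, ev_add, ev_mul x hh]; ring
  have f1 : ξ ^ 2 + (25 + 22 * h) * ev h x lQ ^ 2 = ev h x a0 + ev h x lA * ξ := by
    rw [k0, hξ]; ring
  have f2 : ξ ^ 2 + 8 * ev h x lQ * ξ + (97 + 54 * h) * ev h x lQ ^ 2
      = ev h x b0 + ev h x b1 * ξ := by
    rw [k1, k2, hξ]; ring
  simp only [ev_sub x hh, ev_add, ev_mul x hh, ev_nil] at r0 r1
  rw [f1, f2, ← r0]
  have f3 : (ev h x a0 + ev h x lA * ξ) ^ 2 = ev h x s0 + ev h x s1 * ξ := by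
    rw [k3, k4]; linear_combination ev h x lA ^ 2 * hξ
  have f4 : (ev h x a0 + ev h x lA * ξ) ^ 3 = ev h x c0 + ev h x c1 * ξ := by
    rw [pow_succ, f3, k5, k6]; linear_combination ev h x lA * ev h x s1 * hξ
  rw [f4]
  linear_combination ev h x c1 * ev h x b1 * hξ + ξ * r1

variable (h) in
/-- Denominator of the expression of `x` by the sum `a` and the product `b` of the two roots. -/
def recU (a b : R) : R :=
  (-700 - 616 * h) + (-882 - 588 * h) * a + (-70 - 14 * h) * a ^ 2 + 28 * b
    + (-10 - h) * a ^ 3 + 14 * a * b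

variable (h) in
/-- Numerator of the expression of `x` by the sum `a` and the product `b` of the two roots. -/
def recV (a b : R) : R :=
  (-9828 - 7112 * h) + (-2142 - 1540 * h) * a + (-154 - 98 * h) * a ^ 2 + (196 + 112 * h) * b
    + (-14 - 7 * h) * a ^ 3 + (34 + 16 * h) * a * b

/-- `Q³ · recU (A / Q) (B / Q²)` as a polynomial in `x`. -/
def lU : QPoly :=
  add (mul [(-700, -616)] (QPoly.pow lQ 3)) (add (mul [(-882, -588)] (mul lA (QPoly.pow lQ 2)))
    (add (mul [(-70, -14)] (mul (QPoly.pow lA 2) lQ)) (add (mul [(28, 0)] (mul lB lQ))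
      (add (mul [(-10, -1)] (QPoly.pow lA 3)) (mul [(14, 0)] (mul lA lB))))))

/-- `Q³ · recV (A / Q) (B / Q²)` as a polynomial in `x`. -/
def lV : QPoly :=
  add (mul [(-9828, -7112)] (QPoly.pow lQ 3))
    (add (mul [(-2142, -1540)] (mul lA (QPoly.pow lQ 2)))
    (add (mul [(-154, -98)] (mul (QPoly.pow lA 2) lQ)) (add (mul [(196, 112)] (mul lB lQ))
      (add (mul [(-14, -7)] (QPoly.pow lA 3)) (mul [(34, 16)] (mul lA lB))))))

lemma recU_mul (hh : h * h = 2) (x a b : R) (ha : a * ev h x lQ = ev h x lA)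
    (hb : b * ev h x lQ ^ 2 = ev h x lB) : recU h a b * ev h x lQ ^ 3 = ev h x lU := by
  simp only [lU, ev_add, ev_mul x hh, ev_pow x hh, ev_cons (l := []), ev_nil, ← ha, ← hb, recU]
  push_cast; ring

lemma recV_mul (hh : h * h = 2) (x a b : R) (ha : a * ev h x lQ = ev h x lA)
    (hb : b * ev h x lQ ^ 2 = ev h x lB) : recV h a b * ev h x lQ ^ 3 = ev h x lV := by
  simp only [lV, ev_add, ev_mul x hh, ev_pow x hh, ev_cons (l := []), ev_nil, ← ha, ← hb, recV]
  push_cast; ring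

/-- The parameter `x` is determined by the sum and the product of the two roots attached to it. -/
lemma recover [IsDomain R] (hh : h * h = 2) (x a b : R) (hq : ev h x lQ ≠ 0)
    (ha : a * ev h x lQ = ev h x lA) (hb : b * ev h x lQ ^ 2 = ev h x lB) :
    x * recU h a b = recV h a b := by
  apply mul_right_cancel₀ (pow_ne_zero 3 hq)
  rw [mul_assoc, recU_mul hh x a b ha hb, recV_mul hh x a b ha hb]
  have := ev_eq x hh (mul [(0, 0), (1, 0)] lU) lV (by decide +kernel)
  rw [ev_mul x hh] at this
  simpa using this

end Curve2

/-! ### Evaluation at transcendental elements -/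
section Transcendence
open QPoly

/-- The complex number `√2`. -/
noncomputable def sq2 : ℂ := ((Real.sqrt 2 : ℝ) : ℂ)

lemma sq2_mul : sq2 * sq2 = 2 := by
  rw [sq2, ← Complex.ofReal_mul, Real.mul_self_sqrt (by norm_num)]; norm_num

lemma sq2_indep (a b : ℤ) (hab : (a : ℂ) + b * sq2 = 0) : a = 0 ∧ b = 0 := by
  have h1 : (a : ℝ) + b * Real.sqrt 2 = 0 := by
    have : (((a : ℝ) + b * Real.sqrt 2 : ℝ) : ℂ) = 0 := by rw [← hab, sq2]; push_cast; rfl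
    exact_mod_cast this
  have hb : b = 0 := by
    by_contra hb
    have hb' : (b : ℝ) ≠ 0 := by exact_mod_cast hb
    apply irrational_sqrt_two
    refine ⟨-a / b, ?_⟩
    push_cast
    rw [div_eq_iff hb']
    linarith
  subst hb
  simpa using h1

/-- The complex polynomial with the given coefficients. -/
noncomputable def toPoly (l : QPoly) : ℂ[X] := ev (C sq2) X l

lemma toPoly_cons (c : ℤ × ℤ) (l : QPoly) :
    toPoly (c :: l) = C ((c.1 : ℂ) + c.2 * sq2) + X * toPoly l := by
  simp [toPoly]

lemma toPoly_ne_zero (l : QPoly) (hl : isZero l = false) : toPoly l ≠ 0 := by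
  induction l with
  | nil => simp [isZero] at hl
  | cons c l ih =>
    intro h0
    rw [toPoly_cons] at h0
    have h1 := congrArg (Polynomial.eval 0) h0
    simp only [eval_add, eval_C, eval_mul, eval_X, zero_mul, add_zero, eval_zero] at h1
    obtain ⟨e1, e2⟩ := sq2_indep _ _ h1
    rw [h1, C_0, zero_add] at h0
    have h2 : toPoly l = 0 := by simpa using h0
    refine ih ?_ h2
    simpa [isZero, e1, e2] using hl

lemma eval_toPoly (l : QPoly) (z : ℂ) : (toPoly l).eval z = ev sq2 z l := by
  induction l with
  | nil => simp [toPoly]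
  | cons c l ih => rw [toPoly_cons, ev_cons, ← ih]; simp

lemma aeval_toPoly {A : Type*} [CommRing A] [Algebra ℂ A] (z : A) (l : QPoly) :
    aeval z (toPoly l) = ev (algebraMap ℂ A sq2) z l := by
  induction l with
  | nil => simp [toPoly]
  | cons c l ih => rw [toPoly_cons, ev_cons, ← ih]; simp

lemma ev_ne_zero {A : Type*} [CommRing A] [Algebra ℂ A] {z : A} (hz : Transcendental ℂ z)
    (l : QPoly) (hl : isZero l = false) : ev (algebraMap ℂ A sq2) z l ≠ 0 := by
  rw [← aeval_toPoly]
  exact fun h => toPoly_ne_zero l hl ((transcendental_iff.1 hz) _ h)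

lemma map_ev {A B : Type*} [CommRing A] [CommRing B] (f : A →+* B) (h z : A) (l : QPoly) :
    f (ev h z l) = ev (f h) (f z) l := by
  induction l with
  | nil => simp
  | cons c l ih => simp [ih]

end Transcendence
end Reflection

/-! ### The eight roots and their symmetries -/
section Field
open QPoly
set_option linter.unusedSectionVars false

/-- The image of `√2` in an extension of `ℂ`. -/
noncomputable def hh2 (L : Type*) [Field L] [Algebra ℂ L] : L := algebraMap ℂ L sq2

lemma hh2_mul (L : Type*) [Field L] [Algebra ℂ L] : hh2 L * hh2 L = 2 := by
  rw [hh2, ← map_mul, sq2_mul, map_ofNat]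

/-- The root `(A + G v) / (2Q)` attached to `x` and a square root `v` of `D(x)`. It is `8` times a root
of the octic. -/
noncomputable def rt {L : Type*} [Field L] [Algebra ℂ L] (x v : L) : L :=
  (ev (hh2 L) x lA + ev (hh2 L) x lG * v) / (2 * ev (hh2 L) x lQ)

/-- A square root of `D(y)` when `Φ(x, y) = 0` and `s² = -2x`; see `OcticData.vv_sq`. -/
noncomputable def vv {L : Type*} [Field L] [Algebra ℂ L] (x y s : L) : L :=
  yhat (hh2 L) y x / ((2 + hh2 L) * s * (y - 1))

section
variable {L : Type*} [Field L] [Algebra ℂ L]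

lemma rt_add [CharZero L] (x v : L) (hq : ev (hh2 L) x lQ ≠ 0) :
    (rt x v + rt x (-v)) * ev (hh2 L) x lQ = ev (hh2 L) x lA := by
  simp only [rt]; field_simp; ring

lemma rt_mul [CharZero L] (x v : L) (hq : ev (hh2 L) x lQ ≠ 0) (hv : v ^ 2 = ev (hh2 L) x lD) :
    (rt x v * rt x (-v)) * ev (hh2 L) x lQ ^ 2 = ev (hh2 L) x lB := by
  have := disc_formula (hh2_mul L) x
  simp only [rt]; field_simp
  linear_combination this - ev (hh2 L) x lG ^ 2 * hv

lemma rt_octic [CharZero L] (x v : L) (hq : ev (hh2 L) x lQ ≠ 0) (hv : v ^ 2 = ev (hh2 L) x lD) :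
    (rt x v ^ 2 + (25 + 22 * hh2 L)) ^ 3 * (rt x v ^ 2 + 8 * rt x v + (97 + 54 * hh2 L))
      * ev (hh2 L) x lQ ^ 8 = ev (hh2 L) x lN := by
  rw [← octic_eq (hh2_mul L) x (rt x v * ev (hh2 L) x lQ)]
  · ring
  · have h1 := rt_add x v hq
    have h2 := rt_mul x v hq hv
    rw [← h1, ← h2]; ring

lemma rt_inj [CharZero L] (x v v' : L) (hq : ev (hh2 L) x lQ ≠ 0) (hg : ev (hh2 L) x lG ≠ 0)
    (e : rt x v = rt x v') : v = v' := by
  simp only [rt] at e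
  rw [div_left_inj' (mul_ne_zero two_ne_zero hq), add_right_inj] at e
  exact mul_left_cancel₀ hg e

lemma map_hh2 {K : Type*} [Field K] [Algebra ℂ K] [Algebra K L] [IsScalarTower ℂ K L]
    (σ : L ≃ₐ[K] L) : σ (hh2 L) = hh2 L := by
  rw [hh2, IsScalarTower.algebraMap_apply ℂ K L, σ.commutes]

lemma map_ev' {K : Type*} [Field K] [Algebra ℂ K] [Algebra K L] [IsScalarTower ℂ K L]
    (σ : L ≃ₐ[K] L) (x : L) (l : QPoly) : σ (ev (hh2 L) x l) = ev (hh2 L) (σ x) l := by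
  have := map_ev (σ : L →+* L) (hh2 L) x l
  simpa [map_hh2] using this

lemma map_phi {K : Type*} [Field K] [Algebra ℂ K] [Algebra K L] [IsScalarTower ℂ K L]
    (σ : L ≃ₐ[K] L) (x y : L) : σ (phi (hh2 L) x y) = phi (hh2 L) (σ x) (σ y) := by
  simp [phi, map_ev']

lemma map_rt {K : Type*} [Field K] [Algebra ℂ K] [Algebra K L] [IsScalarTower ℂ K L]
    (σ : L ≃ₐ[K] L) (x v : L) : σ (rt x v) = rt (σ x) (σ v) := by
  simp [rt, map_ev', map_ofNat σ 2]

lemma map_vv {K : Type*} [Field K] [Algebra ℂ K] [Algebra K L] [IsScalarTower ℂ K L]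
    (σ : L ≃ₐ[K] L) (x y s : L) : σ (vv x y s) = vv (σ x) (σ y) (σ s) := by
  simp [vv, yhat, map_ev', map_hh2, map_ofNat σ 2]
lemma ev_hh2_ne_zero {z : L} (hz : Transcendental ℂ z) (l : QPoly) (hl : isZero l = false) :
    ev (hh2 L) z l ≠ 0 := ev_ne_zero hz l hl

lemma vv_neg (x y s : L) : vv x y (-s) = - vv x y s := by
  simp only [vv, mul_neg, neg_mul, div_neg]

end

lemma map_recU {A B : Type*} [CommRing A] [CommRing B] (f : A →+* B) (h a b : A) :
    f (recU h a b) = recU (f h) (f a) (f b) := by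
  simp only [recU, map_add, map_sub, map_mul, map_neg, map_pow, map_ofNat]

lemma map_recV {A B : Type*} [CommRing A] [CommRing B] (f : A →+* B) (h a b : A) :
    f (recV h a b) = recV (f h) (f a) (f b) := by
  simp only [recV, map_add, map_sub, map_mul, map_neg, map_pow, map_ofNat]

/-- The structure of the splitting field `L` of the octic over `K = ℂ(t)`. The field is generated by
`x`, by the three solutions `y k` of `Φ(x, y) = 0` and by `r = √(-2x)`. The element `w` is the square
root of `D(x)` expressed by the Vandermonde product of the `y k`. The automorphism `j` moves only
`r`; it serves to tell roots apart. -/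
structure OcticData (K L : Type*) [Field K] [Field L] [Algebra ℂ K] [Algebra ℂ L] [Algebra K L]
    [IsScalarTower ℂ K L] where
  /-- the parameter of a pair of roots -/
  x : L
  /-- the parameters of the three other pairs -/
  y : Fin 3 → L
  /-- a square root of `-2x` -/
  r : L
  /-- a square root of `D(x)` -/
  w : L
  /-- the right-hand side `8⁸ t` of the octic equation in `Z = 8Y` -/
  T : K
  x_tr : Transcendental ℂ x
  y_tr : ∀ k, Transcendental ℂ (y k)
  phi_eq : ∀ k, phi (hh2 L) x (y k) = 0
  eq_y : ∀ z, phi (hh2 L) x z = 0 → ∃ k, z = y k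
  r_sq : r ^ 2 = -2 * x
  w_eq : w * (4 * (1 + hh2 L) * ev (hh2 L) x lGG) =
    ev (hh2 L) x lE0 ^ 2 * ((y 0 - y 1) * (y 1 - y 2) * (y 2 - y 0))
  w_sq : w ^ 2 = ev (hh2 L) x lD
  T_eq : algebraMap K L T * ev (hh2 L) x lQ ^ 8 = ev (hh2 L) x lN
  /-- the automorphism changing the sign of `r` only -/
  j : L ≃ₐ[K] L
  j_x : j x = x
  j_y : ∀ k, j (y k) = y k
  j_r : j r = -r
  gen : ∀ M : IntermediateField K L, x ∈ M → (∀ k, y k ∈ M) → r ∈ M → M = ⊤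

namespace OcticData
variable {K L : Type*} [Field K] [Field L] [Algebra ℂ K] [Algebra ℂ L] [Algebra K L]
    [IsScalarTower ℂ K L] (d : OcticData K L)

lemma j_sq {s : L} (hs : s ^ 2 = d.r ^ 2) : d.j s = - s := by
  rcases sq_eq_sq_iff_eq_or_eq_neg.1 hs with h | h <;> simp [h, d.j_r]

variable [CharZero L]

lemma x_ne : d.x ≠ 0 := by
  have := ev_hh2_ne_zero d.x_tr [(0, 0), (1, 0)] (by decide)
  simpa using this

lemma r_ne : d.r ≠ 0 := by
  intro h
  have := d.r_sq
  rw [h] at this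
  exact d.x_ne (by simpa using this.symm)

lemma y_sub (k) : d.y k - 1 ≠ 0 := by
  have := ev_hh2_ne_zero (d.y_tr k) [(-1, 0), (1, 0)] (by decide)
  intro h; apply this; simp; linear_combination h

lemma two_add : (2 + hh2 L) ≠ 0 := by
  intro h
  have h1 := hh2_mul L
  have : (2 : L) = 0 := by linear_combination h1 - (hh2 L - 2) * h
  exact two_ne_zero this

lemma one_add : (1 + hh2 L) ≠ 0 := by
  intro h
  have h1 := hh2_mul L
  have : (1 : L) = 0 := by linear_combination -h1 + (hh2 L - 1) * h
  exact one_ne_zero this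

lemma qx : ev (hh2 L) d.x lQ ≠ 0 := ev_hh2_ne_zero d.x_tr _ (by decide)
lemma gx : ev (hh2 L) d.x lG ≠ 0 := ev_hh2_ne_zero d.x_tr _ (by decide)
lemma qy (k) : ev (hh2 L) (d.y k) lQ ≠ 0 := ev_hh2_ne_zero (d.y_tr k) _ (by decide)
lemma gy (k) : ev (hh2 L) (d.y k) lG ≠ 0 := ev_hh2_ne_zero (d.y_tr k) _ (by decide)

lemma w_ne : d.w ≠ 0 := by
  intro h
  have := d.w_sq
  rw [h] at this
  exact ev_hh2_ne_zero d.x_tr lD (by decide) (by simpa using this.symm)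

lemma vv_sq (k) (s : L) (hs : s ^ 2 = d.r ^ 2) :
    vv d.x (d.y k) s ^ 2 = ev (hh2 L) (d.y k) lD := by
  have h1 := yhat_sq (hh2_mul L) (d.y k) d.x (by rw [phi_symm]; exact d.phi_eq k)
    (ev_hh2_ne_zero (d.y_tr k) _ (by decide))
  have h2 := two_add (L := L)
  have h3 := d.y_sub k
  have hs' : s ≠ 0 := by
    intro h; rw [h] at hs; exact d.r_ne (by simpa using hs.symm)
  rw [vv, div_pow, h1, mul_pow, mul_pow, hs, d.r_sq]
  have := d.x_ne
  field_simp

lemma vv_ne (k) (s : L) (hs : s ^ 2 = d.r ^ 2) : vv d.x (d.y k) s ≠ 0 := by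
  intro h
  have := d.vv_sq k s hs
  rw [h] at this
  exact ev_hh2_ne_zero (d.y_tr k) lD (by decide) (by simpa using this.symm)

lemma vv_inj (k) (s s' : L) (hs : s ^ 2 = d.r ^ 2) (hs' : s' ^ 2 = d.r ^ 2)
    (e : vv d.x (d.y k) s = vv d.x (d.y k) s') : s = s' := by
  rcases sq_eq_sq_iff_eq_or_eq_neg.1 (hs.trans hs'.symm) with h | h
  · exact h
  · exfalso
    rw [h, vv_neg, neg_eq_iff_add_eq_zero, ← two_mul] at e
    exact d.vv_ne k s' hs' (by simpa using e)

lemma j_w : d.j d.w = d.w := by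
  have h1 := congrArg d.j d.w_eq
  have h2 : (4 * (1 + hh2 L) * ev (hh2 L) d.x lGG) ≠ 0 :=
    mul_ne_zero (mul_ne_zero (by norm_num) one_add) (ev_hh2_ne_zero d.x_tr _ (by decide))
  simp only [map_mul, map_pow, map_sub, map_ev', d.j_x, d.j_y, map_add, map_one, map_hh2,
    map_ofNat] at h1
  rw [← d.w_eq] at h1
  exact mul_right_cancel₀ h2 h1

/-- The denominator in the formula for `x` does not vanish, so `x` lies in every field containing
`√2` and the two roots attached to `x`. -/
lemma recover_eq (x v : L) (hx : Transcendental ℂ x) (hv : v ^ 2 = ev (hh2 L) x lD) :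
    recU (hh2 L) (rt x v + rt x (-v)) (rt x v * rt x (-v)) ≠ 0 ∧
    x * recU (hh2 L) (rt x v + rt x (-v)) (rt x v * rt x (-v)) =
      recV (hh2 L) (rt x v + rt x (-v)) (rt x v * rt x (-v)) := by
  have hq : ev (hh2 L) x lQ ≠ 0 := ev_hh2_ne_zero hx _ (by decide)
  refine ⟨fun h => ?_, recover (hh2_mul L) x _ _ hq (rt_add x v hq) (rt_mul x v hq hv)⟩
  have := recU_mul (hh2_mul L) x _ _ (rt_add x v hq) (rt_mul x v hq hv)
  rw [h, zero_mul] at this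
  exact ev_hh2_ne_zero hx lU (by decide +kernel) this.symm

lemma eq_of_rt (x v x' v' : L) (hx : Transcendental ℂ x) (hv : v ^ 2 = ev (hh2 L) x lD)
    (hx' : Transcendental ℂ x') (hv' : v' ^ 2 = ev (hh2 L) x' lD) (e1 : rt x v = rt x' v')
    (e2 : rt x (-v) = rt x' (-v')) : x = x' := by
  obtain ⟨h1, h2⟩ := recover_eq x v hx hv
  obtain ⟨h3, h4⟩ := recover_eq x' v' hx' hv'
  rw [e1, e2, ← h4] at h2
  exact mul_right_cancel₀ h3 h2

/-- The automorphism `j` sends the root for the sign `s` to the root for `-s`, so two pairs attached to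
`y k` and `y l` with one common element coincide. -/
lemma rt_y_inj (k l) (s s' : L) (hs : s ^ 2 = d.r ^ 2) (hs' : s' ^ 2 = d.r ^ 2)
    (e : rt (d.y k) (vv d.x (d.y k) s) = rt (d.y l) (vv d.x (d.y l) s')) :
    d.y k = d.y l ∧ s = s' := by
  have e2 := congrArg d.j e
  simp only [map_rt, map_vv, d.j_x, d.j_y, d.j_sq hs, d.j_sq hs', vv_neg] at e2
  have h1 := eq_of_rt _ _ _ _ (d.y_tr k) (d.vv_sq k s hs) (d.y_tr l) (d.vv_sq l s' hs') e e2
  refine ⟨h1, ?_⟩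
  rw [← h1] at e
  exact d.vv_inj k s s' hs hs' (rt_inj _ _ _ (d.qy k) (d.gy k) e)

/-- The roots attached to `x` are fixed by `j`, while those attached to the `y k` are moved. -/
lemma rt_x_ne (v : L) (hv : d.j v = v) (k) (s : L) (hs : s ^ 2 = d.r ^ 2) :
    rt d.x v ≠ rt (d.y k) (vv d.x (d.y k) s) := by
  intro e
  have e2 := congrArg d.j e
  simp only [map_rt, map_vv, d.j_x, d.j_y, d.j_sq hs, hv] at e2
  rw [e] at e2
  have := d.vv_inj k s (-s) hs (by rw [neg_sq, hs]) (rt_inj _ _ _ (d.qy k) (d.gy k) e2)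
  have h0 : s = 0 := self_eq_neg.1 this
  rw [h0] at hs
  exact d.r_ne (by simpa using hs.symm)

lemma y_inj : Function.Injective d.y := by
  have h0 : (d.y 0 - d.y 1) * (d.y 1 - d.y 2) * (d.y 2 - d.y 0) ≠ 0 := by
    intro h
    have := d.w_eq
    rw [h, mul_zero] at this
    refine mul_ne_zero d.w_ne ?_ this
    exact mul_ne_zero (mul_ne_zero (by norm_num) one_add) (ev_hh2_ne_zero d.x_tr _ (by decide))
  simp only [mul_ne_zero_iff, sub_ne_zero] at h0
  obtain ⟨⟨h1, h2⟩, h3⟩ := h0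
  intro a b hab
  fin_cases a <;> fin_cases b <;> simp_all

/-- The eight roots: two attached to `x` and two attached to each `y k`. -/
noncomputable def root : Bool ⊕ (Fin 3 × Bool) → L
  | .inl b => rt d.x (bif b then d.w else -d.w)
  | .inr (k, b) => rt (d.y k) (vv d.x (d.y k) (bif b then d.r else -d.r))

lemma root_inj : Function.Injective d.root := by
  have hs : ∀ b : Bool, (bif b then d.r else -d.r) ^ 2 = d.r ^ 2 := by intro b; cases b <;> simp
  have hw : ∀ b : Bool, d.j (bif b then d.w else -d.w) = (bif b then d.w else -d.w) := by
    intro b; cases b <;> simp [d.j_w]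
  have bi : ∀ (s : L), s ≠ 0 → ∀ b c : Bool, (bif b then s else -s) = (bif c then s else -s) →
      b = c := by
    intro s hs b c
    cases b <;> cases c <;> simp [self_eq_neg, neg_eq_self, hs]
  rintro (b | ⟨k, b⟩) (c | ⟨l, c⟩) e
  · rw [bi _ d.w_ne _ _ (rt_inj _ _ _ d.qx d.gx e)]
  · exact (d.rt_x_ne _ (hw b) l _ (hs c) e).elim
  · exact (d.rt_x_ne _ (hw c) k _ (hs b) e.symm).elim
  · obtain ⟨h1, h2⟩ := d.rt_y_inj k l _ _ (hs b) (hs c) e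
    rw [d.y_inj h1, bi _ d.r_ne _ _ h2]

lemma T_y (k) : algebraMap K L d.T * ev (hh2 L) (d.y k) lQ ^ 8 = ev (hh2 L) (d.y k) lN := by
  have h1 := T_invariant (hh2_mul L) d.x (d.y k) (d.phi_eq k) (ev_hh2_ne_zero d.x_tr _ (by decide))
  have := d.T_eq
  apply mul_right_cancel₀ (pow_ne_zero 8 d.qx)
  rw [h1]; linear_combination ev (hh2 L) (d.y k) lQ ^ 8 * this

lemma root_octic (i) : (d.root i ^ 2 + (25 + 22 * hh2 L)) ^ 3 *
    (d.root i ^ 2 + 8 * d.root i + (97 + 54 * hh2 L)) = algebraMap K L d.T := by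
  rcases i with b | ⟨k, b⟩
  · apply mul_right_cancel₀ (pow_ne_zero 8 d.qx)
    rw [d.T_eq]
    exact rt_octic _ _ d.qx (by cases b <;> simp [d.w_sq])
  · apply mul_right_cancel₀ (pow_ne_zero 8 (d.qy k))
    rw [d.T_y]
    exact rt_octic _ _ (d.qy k) (d.vv_sq k _ (by cases b <;> simp))

lemma fix_all (σ : L ≃ₐ[K] L) (hx : σ d.x = d.x) (hy : ∀ k, σ (d.y k) = d.y k)
    (hr : σ d.r = d.r) : σ = 1 := by
  have key : ∀ z : L, σ z = z → z ∈ IntermediateField.fixedField (Subgroup.zpowers σ) := by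
    intro z hz
    rw [IntermediateField.mem_fixedField_iff]
    intro f hf
    obtain ⟨n, rfl⟩ := Subgroup.mem_zpowers_iff.1 hf
    have h1 : σ ∈ MulAction.stabilizer (L ≃ₐ[K] L) z := hz
    exact zpow_mem h1 n
  have := d.gen _ (key _ hx) (fun k => key _ (hy k)) (key _ hr)
  ext z
  have hz : z ∈ IntermediateField.fixedField (Subgroup.zpowers σ) := by rw [this]; trivial
  exact (IntermediateField.mem_fixedField_iff _ _).1 hz σ (Subgroup.mem_zpowers σ)

lemma delta_fix (σ : L ≃ₐ[K] L) (hx : σ d.x = d.x) (hw : σ d.w = d.w) :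
    (σ (d.y 0) - σ (d.y 1)) * (σ (d.y 1) - σ (d.y 2)) * (σ (d.y 2) - σ (d.y 0)) =
      (d.y 0 - d.y 1) * (d.y 1 - d.y 2) * (d.y 2 - d.y 0) := by
  have h1 := congrArg σ d.w_eq
  simp only [map_mul, map_pow, map_sub, map_ev', hx, hw, map_add, map_one, map_hh2,
    map_ofNat] at h1
  rw [d.w_eq] at h1
  exact (mul_left_cancel₀ (pow_ne_zero 2 (ev_hh2_ne_zero d.x_tr _ (by decide))) h1).symm

/-- An automorphism fixing the two roots attached to `x` and one root attached to `y 0` fixes `x`, `w`,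
`y 0` and `r`. As it fixes the Vandermonde product, it cannot exchange `y 1` and `y 2`. -/
lemma root_stab (σ : L ≃ₐ[K] L) (h1 : σ (d.root (.inl true)) = d.root (.inl true))
    (h2 : σ (d.root (.inl false)) = d.root (.inl false))
    (h3 : σ (d.root (.inr (0, true))) = d.root (.inr (0, true))) : σ = 1 := by
  simp only [root, cond_true, cond_false, map_rt, map_vv, map_neg] at h1 h2 h3
  have hq : σ d.x = d.x := by
    refine (eq_of_rt (σ d.x) (σ d.w) d.x d.w ?_ ?_ d.x_tr d.w_sq h1 h2)
    · have htr := transcendental_iff.1 d.x_tr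
      refine transcendental_iff.2 fun p hp => htr p ((σ.restrictScalars ℂ).injective ?_)
      rw [map_zero, ← hp]
      exact (aeval_algHom_apply (σ.restrictScalars ℂ).toAlgHom d.x p).symm
    · rw [← map_ev', ← d.w_sq, map_pow]
  rw [hq] at h1 h3
  have hw := rt_inj _ _ _ d.qx d.gx h1
  have hy : ∀ k, ∃ l, σ (d.y k) = d.y l := by
    intro k
    apply d.eq_y
    have := congrArg σ (d.phi_eq k)
    rwa [map_phi, hq, map_zero] at this
  have hr : (σ d.r) ^ 2 = d.r ^ 2 := by rw [← map_pow, d.r_sq]; simp [hq, map_ofNat σ 2]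
  obtain ⟨l, hl⟩ := hy 0
  rw [hl] at h3
  obtain ⟨e1, e2⟩ := d.rt_y_inj _ _ _ _ hr rfl h3
  rw [e1] at hl
  have hd := d.delta_fix σ hq hw
  have hi : ∀ a b, a ≠ b → d.y a ≠ d.y b := fun a b hab h => hab (d.y_inj h)
  have n01 := sub_ne_zero.2 (hi 0 1 (by decide))
  have n12 := sub_ne_zero.2 (hi 1 2 (by decide))
  have n20 := sub_ne_zero.2 (hi 2 0 (by decide))
  have ne : ∀ k, k ≠ 0 → σ (d.y k) ≠ d.y 0 := by
    intro k hk h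
    exact hi k 0 hk (σ.injective (h.trans hl.symm))
  have h12 : σ (d.y 1) ≠ σ (d.y 2) := fun h => hi 1 2 (by decide) (σ.injective h)
  have fin : σ (d.y 1) = d.y 1 ∧ σ (d.y 2) = d.y 2 := by
    obtain ⟨a, ha⟩ := hy 1
    obtain ⟨b, hb⟩ := hy 2
    have na := ne 1 (by decide)
    have nb := ne 2 (by decide)
    rw [ha] at na h12 hd ⊢
    rw [hb] at nb h12 hd ⊢
    rw [hl] at hd
    fin_cases a <;> fin_cases b <;> simp only [Fin.zero_eta, Fin.mk_one, Fin.reduceFinMk, ne_eq,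
      not_true_eq_false] at na nb h12 hd ⊢
    · exact ⟨trivial, trivial⟩
    · exfalso
      have h0 : 2 * ((d.y 0 - d.y 1) * (d.y 1 - d.y 2) * (d.y 2 - d.y 0)) = 0 := by
        linear_combination -hd
      exact mul_ne_zero two_ne_zero (mul_ne_zero (mul_ne_zero n01 n12) n20) h0
  refine d.fix_all σ hq ?_ e2
  intro k
  fin_cases k
  · exact hl
  · exact fin.1
  · exact fin.2

/-- If `L` has degree at least `336` over `K`, then a polynomial `P` of degree eight having
the elements `root i / 8` as roots has splitting field `L` and Galois group `PGL₂(𝔽₇)`. -/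
theorem pgl (hdeg : 336 ≤ Module.finrank K L) (P : K[X]) (hP : P.natDegree = 8)
    (hroot : ∀ z : L, (z ^ 2 + (25 + 22 * hh2 L)) ^ 3 * (z ^ 2 + 8 * z + (97 + 54 * hh2 L)) =
      algebraMap K L d.T → aeval (z / 8) P = 0) :
    Nonempty (P.Gal ≃* (Matrix.GeneralLinearGroup (Fin 2) (ZMod 7) ⧸
      Subgroup.center (Matrix.GeneralLinearGroup (Fin 2) (ZMod 7)))) := by
  classical
  have hfd : FiniteDimensional K L := Module.finite_of_finrank_pos (by omega)
  have hP0 : P ≠ 0 := by rintro rfl; simp at hP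
  set f : Bool ⊕ (Fin 3 × Bool) → L := fun i => d.root i / 8 with hf
  have h8 : (8 : L) ≠ 0 := by norm_num
  have f_inj : Function.Injective f := fun a b h => d.root_inj ((div_left_inj' h8).1 h)
  have f_mem : ∀ i, aeval (f i) P = 0 := fun i => hroot _ (d.root_octic i)
  have hsub : Finset.univ.image f ⊆ (P.aroots L).toFinset := by
    intro z hz
    obtain ⟨i, -, rfl⟩ := Finset.mem_image.1 hz
    rw [Multiset.mem_toFinset, mem_aroots]
    exact ⟨hP0, f_mem i⟩
  have hcard : (Finset.univ.image f).card = 8 := by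
    rw [Finset.card_image_of_injective _ f_inj]; decide
  have hc2 : Multiset.card (P.aroots L) ≤ 8 := by
    have := card_roots' (P.map (algebraMap K L))
    rwa [natDegree_map, hP] at this
  have hc3 := Multiset.toFinset_card_le (P.aroots L)
  have hc4 := Finset.card_le_card hsub
  have hEq : Finset.univ.image f = (P.aroots L).toFinset :=
    Finset.eq_of_subset_of_card_le hsub (by omega)
  have hsplit : (P.map (algebraMap K L)).Splits := by
    rw [splits_iff_card_roots, natDegree_map, hP]
    change Multiset.card (P.aroots L) = 8
    omega
  have hset : P.rootSet L = Set.range f := by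
    ext z
    rw [rootSet, ← hEq]
    simp
  have hsf : IsSplittingField K L P := by
    rw [isSplittingField_iff_intermediateField]
    refine ⟨hsplit, ?_⟩
    set M := IntermediateField.adjoin K (P.rootSet L) with hM
    have hmem : ∀ i, d.root i ∈ M := by
      intro i
      have h1 : f i ∈ M := IntermediateField.subset_adjoin K _ (by rw [hset]; exact ⟨i, rfl⟩)
      have h2 : (8 : L) ∈ M := ofNat_mem M 8
      have := mul_mem h1 h2
      rwa [hf, div_mul_cancel₀ _ h8] at this
    have hh : hh2 L ∈ M := by
      rw [hh2, IsScalarTower.algebraMap_apply ℂ K L]; exact M.algebraMap_mem _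
    have hn : ∀ n : ℕ, (n : L) ∈ M := fun n => natCast_mem M n
    have hev : ∀ z ∈ M, ∀ l, ev (hh2 L) z l ∈ M := by
      intro z hz l
      induction l with
      | nil => exact zero_mem _
      | cons c l ih =>
        exact add_mem (add_mem (intCast_mem M _) (mul_mem (intCast_mem M _) hh)) (mul_mem hz ih)
    have hrec : ∀ (x v : L), Transcendental ℂ x → v ^ 2 = ev (hh2 L) x lD →
        rt x v ∈ M → rt x (-v) ∈ M → x ∈ M := by
      intro x v hx hv h1 h2
      obtain ⟨e1, e2⟩ := recover_eq x v hx hv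
      rw [← eq_div_iff e1] at e2
      rw [e2]
      have ha := add_mem h1 h2
      have hb := mul_mem h1 h2
      generalize rt x v + rt x (-v) = a at *
      generalize rt x v * rt x (-v) = b at *
      lift a to M using ha
      lift b to M using hb
      generalize hh2 L = h at *
      lift h to M using hh
      refine div_mem ?_ ?_
      · have := map_recV (algebraMap M L) h a b
        exact this ▸ SetLike.coe_mem (recV h a b)
      · have := map_recU (algebraMap M L) h a b
        exact this ▸ SetLike.coe_mem (recU h a b)
    have hx : d.x ∈ M := hrec d.x d.w d.x_tr d.w_sq (hmem (.inl true)) (hmem (.inl false))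
    have hy : ∀ k, d.y k ∈ M := fun k =>
      hrec (d.y k) _ (d.y_tr k) (d.vv_sq k d.r rfl) (hmem (.inr (k, true)))
        (by rw [← vv_neg]; exact hmem (.inr (k, false)))
    refine d.gen M hx hy ?_
    have hv : vv d.x (d.y 0) d.r ∈ M := by
      have e : vv d.x (d.y 0) d.r = (d.root (.inr (0, true)) * (2 * ev (hh2 L) (d.y 0) lQ)
          - ev (hh2 L) (d.y 0) lA) / ev (hh2 L) (d.y 0) lG := by
        have := d.qy 0
        have := d.gy 0
        simp only [root, rt, cond_true]
        field_simp
        ring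
      rw [e]
      exact div_mem (sub_mem (mul_mem (hmem _) (mul_mem (ofNat_mem M 2) (hev _ (hy 0) _)))
        (hev _ (hy 0) _)) (hev _ (hy 0) _)
    have e : d.r = yhat (hh2 L) (d.y 0) d.x / ((2 + hh2 L) * vv d.x (d.y 0) d.r * (d.y 0 - 1)) := by
      have h1 := d.vv_ne 0 d.r rfl
      have h2 := two_add (L := L)
      have h3 := d.y_sub 0
      have h4 := d.r_ne
      rw [eq_div_iff (mul_ne_zero (mul_ne_zero h2 h1) h3), vv]
      field_simp
    rw [e]
    refine div_mem ?_ (mul_mem (mul_mem (add_mem (ofNat_mem M 2) hh) hv)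
      (sub_mem (hy 0) (one_mem M)))
    exact add_mem (add_mem (hev _ (hy 0) _) (mul_mem (hev _ (hy 0) _) hx))
      (mul_mem (hev _ (hy 0) _) (pow_mem hx 2))
  have : CharZero K := charZero_of_injective_algebraMap (algebraMap ℂ K).injective
  have : Normal K L := Normal.of_isSplittingField P
  have hgal : IsGalois K L := { }
  let Ω : SubMulAction (L ≃ₐ[K] L) L :=
    { carrier := P.rootSet L
      smul_mem' := fun σ z hz => by
        rw [mem_rootSet_of_ne hP0] at hz ⊢
        rw [AlgEquiv.smul_def, ← AlgEquiv.coe_toAlgHom, aeval_algHom_apply, hz, map_zero] }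
  have hΩ : ∀ z, z ∈ Ω ↔ z ∈ P.rootSet L := fun z => Iff.rfl
  have hmem : ∀ i, f i ∈ Ω := fun i => by rw [hΩ, hset]; exact ⟨i, rfl⟩
  have hstab : ∀ σ : L ≃ₐ[K] L, ∀ i, σ • (⟨f i, hmem i⟩ : Ω) = ⟨f i, hmem i⟩ →
      σ (d.root i) = d.root i := by
    intro σ i h
    have h1 : σ (f i) = f i := congrArg Subtype.val h
    rw [hf, map_div₀, map_ofNat] at h1
    exact (div_left_inj' h8).1 h1
  have hf1 : FaithfulSMul (L ≃ₐ[K] L) Ω := by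
    constructor
    intro σ σ' h
    have h1 : ∀ i, (σ'⁻¹ * σ) • (⟨f i, hmem i⟩ : Ω) = ⟨f i, hmem i⟩ := by
      intro i
      rw [mul_smul, h, inv_smul_smul]
    have := d.root_stab (σ'⁻¹ * σ) (hstab _ _ (h1 _)) (hstab _ _ (h1 _)) (hstab _ _ (h1 _))
    rw [inv_mul_eq_one] at this
    exact this.symm
  have hne : ∀ i j, i ≠ j → (⟨f i, hmem i⟩ : Ω) ≠ ⟨f j, hmem j⟩ := by
    intro i j hij h
    exact hij (f_inj (congrArg Subtype.val h))
  have hΩcard : Nat.card Ω = 8 := by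
    change Nat.card (P.rootSet L) = 8
    rw [hset, Nat.card_congr (Equiv.ofInjective f f_inj).symm, Nat.card_eq_fintype_card]
    decide
  obtain ⟨e⟩ := pgl_of_sharp (G := L ≃ₐ[K] L) (Ω := Ω) hΩcard
    (by rw [IsGalois.card_aut_eq_finrank]; exact hdeg)
    ⟨f (.inl true), hmem _⟩ ⟨f (.inl false), hmem _⟩ ⟨f (.inr (0, true)), hmem _⟩
    (hne _ _ (by decide)) (hne _ _ (by decide)) (hne _ _ (by decide))
    (fun σ h1 h2 h3 => d.root_stab σ (hstab _ _ h1) (hstab _ _ h2) (hstab _ _ h3))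
  exact ⟨(AlgEquiv.autCongr (IsSplittingField.algEquiv L P)).symm.trans e⟩

end OcticData
end Field

/-! ### Nonsquares and irreducibility over ℂ(x) -/
section RationalFunctions
open QPoly

lemma eval_toPoly_int (c : ℤ × ℤ) (l : QPoly) :
    (toPoly l).eval ((c.1 : ℂ) + c.2 * sq2) = (evalc c l).1 + (evalc c l).2 * sq2 := by
  rw [eval_toPoly, ev_evalc sq2_mul]

lemma natDegree_toPoly (c : ℤ × ℤ) (l : QPoly) (hc : c ≠ (0, 0)) :
    (toPoly (l ++ [c])).natDegree = l.length := by
  induction l with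
  | nil => rw [List.nil_append, toPoly_cons, toPoly, ev_nil, mul_zero, add_zero, natDegree_C]; rfl
  | cons d l ih =>
    rw [List.cons_append, toPoly_cons, natDegree_C_add, natDegree_X_mul, ih, List.length_cons]
    intro h0
    have : isZero (l ++ [c]) = true := by
      by_contra hne
      exact toPoly_ne_zero _ (by simpa using hne) h0
    clear ih h0
    induction l with
    | nil =>
      simp only [List.nil_append, isZero, Bool.and_eq_true, beq_iff_eq] at this
      exact hc (Prod.ext this.1.1 this.1.2)
    | cons e l ih =>
      simp only [List.cons_append, isZero, Bool.and_eq_true] at this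
      exact ih this.2

lemma not_sq_of_odd (f : ℂ[X]) (hf : Odd f.natDegree) (g : ℂ[X]) : g ^ 2 ≠ f := by
  rintro rfl
  rw [natDegree_pow] at hf
  exact (Nat.not_odd_iff_even.2 (even_two_mul _)) hf

set_option linter.unusedSectionVars false

variable {F : Type*} [Field F] [Algebra ℂ F] [Algebra ℂ[X] F] [IsFractionRing ℂ[X] F]
  [IsScalarTower ℂ ℂ[X] F]

lemma ev_algebraMap (l : QPoly) :
    ev (hh2 F) (algebraMap ℂ[X] F X) l = algebraMap ℂ[X] F (toPoly l) := by
  rw [toPoly, map_ev]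
  congr 1
  rw [hh2, IsScalarTower.algebraMap_apply ℂ ℂ[X] F]
  rfl

lemma X_transcendental : Transcendental ℂ (algebraMap ℂ[X] F X) :=
  (transcendental_algebraMap_iff (IsFractionRing.injective ℂ[X] F)).2 (transcendental_X ℂ)

lemma not_sq_ev (l : QPoly) (hl : ∀ g : ℂ[X], g ^ 2 ≠ toPoly l) (z : F) :
    z ^ 2 ≠ ev (hh2 F) (algebraMap ℂ[X] F X) l := by
  intro h
  rw [ev_algebraMap] at h
  obtain ⟨g, rfl⟩ := IsIntegrallyClosed.exists_algebraMap_eq_of_isIntegral_pow (R := ℂ[X])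
    (x := z) (n := 2) two_pos (by rw [h]; exact isIntegral_algebraMap)
  rw [← map_pow] at h
  exact hl g (IsFractionRing.injective ℂ[X] F h)

lemma not_sq_x (z : F) : z ^ 2 ≠ -2 * algebraMap ℂ[X] F X := by
  have := not_sq_ev (F := F) [(0, 0), (-2, 0)] (not_sq_of_odd _ (by
    rw [show [(0, 0), (-2, 0)] = [((0 : ℤ), (0 : ℤ))] ++ [(-2, 0)] from rfl,
      natDegree_toPoly _ _ (by decide)]; decide)) z
  simpa [mul_comm] using this

lemma not_sq_D (z : F) : z ^ 2 ≠ ev (hh2 F) (algebraMap ℂ[X] F X) lD :=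
  not_sq_ev (F := F) lD (not_sq_of_odd _ (by
    have : lD = [(-160, -112), (328, 224), (-272, -176)] ++ [(8, 0)] := rfl
    rw [this, natDegree_toPoly _ _ (by decide)]; decide)) z

lemma not_sq_xD (z : F) :
    z ^ 2 ≠ -2 * algebraMap ℂ[X] F X * ev (hh2 F) (algebraMap ℂ[X] F X) lD := by
  have key := not_sq_ev (F := F) ((0, 0) :: smulc (-2, 0) lD) ?_ z
  · rw [ev_cons, ev_smulc _ (hh2_mul F)] at key
    intro h
    apply key
    rw [h]; push_cast; ring
  · intro g hg
    rw [toPoly_cons] at hg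
    simp only [Int.cast_zero, zero_mul, add_zero, C_0, zero_add] at hg
    have h1 : (X : ℂ[X]) ∣ g := prime_X.dvd_of_dvd_pow ⟨_, hg⟩
    obtain ⟨u, rfl⟩ := h1
    have h2 : toPoly (smulc (-2, 0) lD) = X * u ^ 2 := by
      apply mul_left_cancel₀ (X_ne_zero (R := ℂ)); rw [← hg]; ring
    have h3 := congrArg (eval 0) h2
    have h4 := eval_toPoly_int (0, 0) (smulc (-2, 0) lD)
    simp only [Int.cast_zero, zero_mul, add_zero, eval_mul, eval_X] at h3 h4
    rw [h3] at h4
    have := sq2_indep _ _ h4.symm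
    revert this
    decide

/-- `Φ(x, ·)` has no root in `ℂ(x)`. At `e = 1 + 2√2` it becomes `(12 + 8√2)(y - 3)³`, while
`Φ(x, 3)` has a simple zero at `x = e`; so the shifted cubic is of Eisenstein type at `x - e`. -/
lemma phi_ne_zero (z : F) : phi (hh2 F) (algebraMap ℂ[X] F X) z ≠ 0 := by
  intro h
  obtain ⟨a, ⟨b, hb⟩, hab, rfl⟩ := IsFractionRing.exists_reduced_fraction (A := ℂ[X]) z
  have hb0 : algebraMap ℂ[X] F b ≠ 0 :=
    IsFractionRing.to_map_ne_zero_of_mem_nonZeroDivisors hb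
  simp only [phi, ev_algebraMap, IsFractionRing.mk'_eq_div] at h
  have h0 : toPoly lE0 * a ^ 3 - toPoly lE1 * a ^ 2 * b + toPoly lE2 * a * b ^ 2
      - toPoly lE3 * b ^ 3 = 0 := by
    apply IsFractionRing.injective ℂ[X] F
    simp only [map_add, map_sub, map_mul, map_pow, map_zero]
    field_simp at h
    linear_combination h
  set e : ℂ := ((1 : ℤ) : ℂ) + (2 : ℤ) * sq2 with he
  have ev' : ∀ l, (toPoly l).eval e = (evalc (1, 2) l).1 + (evalc (1, 2) l).2 * sq2 :=
    fun l => eval_toPoly_int (1, 2) l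
  have v0 : (toPoly lE0).eval e = 12 + 8 * sq2 := by
    rw [ev', show evalc (1, 2) lE0 = (12, 8) by decide]; push_cast; ring
  have v1 : (toPoly lE1).eval e = 9 * (12 + 8 * sq2) := by
    rw [ev', show evalc (1, 2) lE1 = (108, 72) by decide]; push_cast; ring
  have v2 : (toPoly lE2).eval e = 27 * (12 + 8 * sq2) := by
    rw [ev', show evalc (1, 2) lE2 = (324, 216) by decide]; push_cast; ring
  have v3 : (toPoly lE3).eval e = 27 * (12 + 8 * sq2) := by
    rw [ev', show evalc (1, 2) lE3 = (324, 216) by decide]; push_cast; ring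
  have n0 : (12 + 8 * sq2 : ℂ) ≠ 0 := by
    intro h
    have := sq2_indep 12 8 (by push_cast; exact h)
    omega
  have h1 := congrArg (eval e) h0
  simp only [eval_add, eval_sub, eval_mul, eval_pow, v0, v1, v2, v3, eval_zero] at h1
  have h2 : a.eval e = 3 * b.eval e := by
    have : (12 + 8 * sq2) * (a.eval e - 3 * b.eval e) ^ 3 = 0 := by linear_combination h1
    rw [mul_eq_zero, or_iff_right n0, pow_eq_zero_iff three_ne_zero, sub_eq_zero] at this
    exact this
  have dv : ∀ f : ℂ[X], f.eval e = 0 → ∃ u, f = (X - C e) * u := fun f hf =>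
    dvd_iff_isRoot.2 hf
  obtain ⟨c, hc⟩ := dv (a - 3 * b) (by simp [h2])
  obtain ⟨u1, hu1⟩ := dv (9 * toPoly lE0 - toPoly lE1) (by simp [v0, v1])
  obtain ⟨u2, hu2⟩ := dv (27 * toPoly lE0 - 6 * toPoly lE1 + toPoly lE2)
    (by simp [v0, v1, v2]; ring)
  have hu3 : 27 * toPoly lE0 - 9 * toPoly lE1 + 3 * toPoly lE2 - toPoly lE3 =
      (X - C e) * toPoly [(48, 32), (0, -32), (16, 0)] := by
    have hs : (C sq2 : ℂ[X]) * C sq2 = 2 := by rw [← C_mul, sq2_mul]; rfl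
    simp only [toPoly, lE0, lE1, lE2, lE3, ev_cons, ev_nil, he, map_add, map_mul, map_intCast]
    push_cast
    linear_combination (64 - 64 * X) * hs
  have hne : (X - C e : ℂ[X]) ≠ 0 := X_sub_C_ne_zero e
  have h3 : toPoly [(48, 32), (0, -32), (16, 0)] * b ^ 3 =
      -((X - C e) * (toPoly lE0 * (X - C e) * c ^ 3 + u1 * (X - C e) * b * c ^ 2
        + u2 * b ^ 2 * c)) := by
    apply mul_left_cancel₀ hne
    have ha : a = (X - C e) * c + 3 * b := by rw [← hc]; ring
    rw [ha] at h0
    linear_combination h0 - b ^ 3 * hu3 - ((X - C e) ^ 2 * c ^ 2 * b) * hu1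
      - ((X - C e) * c * b ^ 2) * hu2
  have h4 := congrArg (eval e) h3
  simp only [eval_mul, eval_pow, eval_neg, eval_sub, eval_X, eval_C, sub_self, zero_mul, neg_zero,
    mul_eq_zero] at h4
  have v4 : (toPoly [(48, 32), (0, -32), (16, 0)]).eval e ≠ 0 := by
    rw [ev']
    intro h
    have := sq2_indep _ _ h
    revert this
    decide
  rw [or_iff_right v4, pow_eq_zero_iff three_ne_zero] at h4
  rw [h4, mul_zero] at h2
  have := hab (dvd_iff_isRoot.2 h2) (dvd_iff_isRoot.2 h4)
  exact not_isUnit_X_sub_C e this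

end RationalFunctions

/-! ### ℂ(x) as an extension of ℂ(t) of degree at least 28 -/
section BaseField
open QPoly

/-- The rational function `N / (8⁸ Q⁸)` of `x` expressing `t`. -/
noncomputable def tF : RatFunc ℂ :=
  algebraMap ℂ[X] (RatFunc ℂ) (toPoly lN) /
    algebraMap ℂ[X] (RatFunc ℂ) (C (8 ^ 8) * toPoly lQ ^ 8)

lemma toPoly_lQ : toPoly lQ = (X - C (((1 : ℤ) : ℂ) + (0 : ℤ) * sq2)) *
    ((X - C (((-1 : ℤ) : ℂ) + (0 : ℤ) * sq2)) * (X - C (((3 : ℤ) : ℂ) + (2 : ℤ) * sq2))) := by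
  simp only [toPoly, lQ, ev_cons, ev_nil, map_add, map_mul, map_intCast]
  push_cast
  ring

lemma coprime_N (c : ℤ × ℤ) (hc : evalc c lN ≠ (0, 0)) :
    IsCoprime (toPoly lN) (X - C ((c.1 : ℂ) + c.2 * sq2)) := by
  refine IsCoprime.symm (((irreducible_X_sub_C _).coprime_iff_not_dvd).2 ?_)
  rw [dvd_iff_isRoot, IsRoot, eval_toPoly_int]
  intro h
  obtain ⟨h1, h2⟩ := sq2_indep _ _ h
  exact hc (Prod.ext h1 h2)

lemma coprime_N_Q : IsCoprime (toPoly lN) (C (8 ^ 8) * toPoly lQ ^ 8) := by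
  have hu : IsUnit (C (8 ^ 8 : ℂ)) := isUnit_C.2 (by norm_num)
  rw [isCoprime_mul_unit_left_right hu]
  apply IsCoprime.pow_right
  rw [toPoly_lQ]
  exact (coprime_N (1, 0) (by decide +kernel)).mul_right
    ((coprime_N (-1, 0) (by decide +kernel)).mul_right (coprime_N (3, 2) (by decide +kernel)))

lemma tF_num : 28 ≤ tF.num.natDegree := by
  have hq : C (8 ^ 8) * toPoly lQ ^ 8 ≠ 0 :=
    mul_ne_zero (by rw [Ne, C_eq_zero]; norm_num) (pow_ne_zero _ (toPoly_ne_zero _ (by decide)))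
  have hN : toPoly lN ≠ 0 := toPoly_ne_zero _ (by decide +kernel)
  have h0 : tF ≠ 0 := div_ne_zero (RatFunc.algebraMap_ne_zero hN) (RatFunc.algebraMap_ne_zero hq)
  have h1 : tF.num * (C (8 ^ 8) * toPoly lQ ^ 8) = toPoly lN * tF.denom := by
    apply RatFunc.algebraMap_injective ℂ
    have h2 := RatFunc.num_div_denom tF
    have h3 := RatFunc.algebraMap_ne_zero tF.denom_ne_zero
    have h4 := RatFunc.algebraMap_ne_zero hq
    rw [map_mul, map_mul (algebraMap ℂ[X] (RatFunc ℂ)) (toPoly lN)]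
    rw [div_eq_iff h3] at h2
    rw [h2]
    simp only [tF]
    field_simp
  have h2 : toPoly lN ∣ tF.num := coprime_N_Q.dvd_of_dvd_mul_right ⟨_, h1⟩
  have h3 := natDegree_le_of_dvd h2 (RatFunc.num_ne_zero h0)
  have h4 : lN = lN.dropLast ++ [(16, 0)] := by decide +kernel
  rw [h4, natDegree_toPoly _ _ (by decide)] at h3
  exact h3

lemma tF_transcendental : Transcendental ℂ tF := by
  apply RatFunc.transcendental_of_ne_C
  rintro ⟨c, hc⟩
  have := tF_num
  rw [hc] at this
  simp at this

/-- The field `ℂ(x)`, a copy of `RatFunc ℂ` carrying the structure of an extension of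
`ℂ(t) = RatFunc ℂ` in which `t` is mapped to `tF`. -/
def FF : Type := RatFunc ℂ

noncomputable instance : Field FF := inferInstanceAs (Field (RatFunc ℂ))
noncomputable instance : Algebra ℂ FF := inferInstanceAs (Algebra ℂ (RatFunc ℂ))
noncomputable instance : Algebra ℂ[X] FF := inferInstanceAs (Algebra ℂ[X] (RatFunc ℂ))
instance : IsFractionRing ℂ[X] FF := inferInstanceAs (IsFractionRing ℂ[X] (RatFunc ℂ))
instance : IsScalarTower ℂ ℂ[X] FF := inferInstanceAs (IsScalarTower ℂ ℂ[X] (RatFunc ℂ))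

/-- The embedding of `ℂ(t)` in `ℂ(x)` with `t ↦ tF`. -/
noncomputable def tHom : RatFunc ℂ →ₐ[ℂ] FF :=
  (IntermediateField.adjoin ℂ {tF}).val.comp
    (RatFunc.algEquivOfTranscendental tF tF_transcendental).toAlgHom

noncomputable instance : Algebra (RatFunc ℂ) FF := tHom.toRingHom.toAlgebra

instance : IsScalarTower ℂ (RatFunc ℂ) FF :=
  IsScalarTower.of_algebraMap_eq fun c => (tHom.commutes c).symm

lemma algebraMap_X_FF : algebraMap (RatFunc ℂ) FF RatFunc.X = tF :=
  RatFunc.algEquivOfTranscendental_X tF tF_transcendental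

/-- By Lüroth degree theory, the degree of `ℂ(x)` over `ℂ(t)` is that of the reduced fraction `tF`. -/
lemma finrank_FF : 28 ≤ Module.finrank (RatFunc ℂ) FF := by
  have h1 := RatFunc.finrank_eq_max_natDegree tF
  have h2 : Module.finrank (RatFunc ℂ) FF =
      Module.finrank (IntermediateField.adjoin ℂ {tF}) (RatFunc ℂ) :=
    Algebra.finrank_eq_of_equiv_equiv
      (RatFunc.algEquivOfTranscendental tF tF_transcendental).toRingEquiv
      (RingEquiv.refl (RatFunc ℂ)) (by ext; rfl)
  rw [h2, h1]
  exact le_max_of_le_left tF_num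

end BaseField

/-! ### The splitting field over ℂ(x) -/
section SplittingField
open QPoly

set_option linter.unusedSectionVars false

variable {F : Type*} [Field F] [Algebra ℂ F] [Algebra ℂ[X] F] [IsFractionRing ℂ[X] F]
  [IsScalarTower ℂ ℂ[X] F]

variable (F) in
/-- The cubic `Φ(x, ·)` over `F = ℂ(x)`. -/
noncomputable def phiCubic : Cubic F :=
  ⟨ev (hh2 F) (algebraMap ℂ[X] F X) lE0, -ev (hh2 F) (algebraMap ℂ[X] F X) lE1,
    ev (hh2 F) (algebraMap ℂ[X] F X) lE2, -ev (hh2 F) (algebraMap ℂ[X] F X) lE3⟩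

variable (F) in
/-- The polynomial `Φ(x, Y) (Y² + 2x)` over `F = ℂ(x)`, with splitting field `L`. -/
noncomputable def phiResolvent : F[X] :=
  (phiCubic F).toPoly * (X ^ 2 + C (2 * algebraMap ℂ[X] F X))

lemma phiCubic_a : (phiCubic F).a ≠ 0 := ev_hh2_ne_zero X_transcendental _ (by decide)

lemma quad_monic (a : F) : (X ^ 2 + C a : F[X]).Monic := by monicity!

lemma phiCubic_irreducible : Irreducible (phiCubic F).toPoly := by
  have h3 := Cubic.natDegree_of_a_ne_zero (phiCubic_a (F := F))
  rw [irreducible_iff_roots_eq_zero_of_degree_le_three (by omega) (by omega)]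
  rw [Multiset.eq_zero_iff_forall_notMem]
  intro z hz
  have := (Cubic.mem_roots_iff (Cubic.ne_zero_of_a_ne_zero phiCubic_a) z).1 hz
  apply phi_ne_zero z
  rw [← this]
  simp only [phi, phiCubic]; ring

variable {L : Type*} [Field L] [Algebra F L] [Algebra ℂ L] [IsScalarTower ℂ F L]

lemma hh2_map : algebraMap F L (hh2 F) = hh2 L := by
  rw [hh2, ← IsScalarTower.algebraMap_apply ℂ F L]; rfl

lemma ev_map (z : F) (l : QPoly) :
    algebraMap F L (ev (hh2 F) z l) = ev (hh2 L) (algebraMap F L z) l := by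
  rw [map_ev, hh2_map]

variable (F L) in
/-- The variable `x` as an element of `L`. -/
noncomputable def xL : L := algebraMap F L (algebraMap ℂ[X] F X)

lemma xL_tr : Transcendental ℂ (xL F L) :=
  (transcendental_algebraMap_iff (algebraMap F L).injective).2 X_transcendental

lemma mem_phiCubic_roots (z : L) :
    z ∈ (Cubic.map (algebraMap F L) (phiCubic F)).roots ↔ phi (hh2 L) (xL F L) z = 0 := by
  rw [Cubic.mem_roots_iff (Cubic.ne_zero_of_a_ne_zero ?_)]
  · simp only [Cubic.map, phiCubic, map_neg, ev_map, phi, xL]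
    ring_nf
  · exact (_root_.map_ne_zero _).2 phiCubic_a

/-- An algebraic `y` would be a constant, as `ℂ` is algebraically closed, contradicting
`phi_ne_zero`. -/
lemma y_transcendental (z : L) (hz : phi (hh2 L) (xL F L) z = 0) : Transcendental ℂ z := by
  intro halg
  have h1 := IsAlgClosed.degree_eq_one_of_irreducible ℂ (minpoly.irreducible halg.isIntegral)
  obtain ⟨c, rfl⟩ := minpoly.mem_range_of_degree_eq_one ℂ z h1
  apply phi_ne_zero (algebraMap ℂ F c)
  apply (algebraMap F L).injective
  rw [map_zero, ← hz, IsScalarTower.algebraMap_apply ℂ F L]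
  simp only [phi, map_add, map_sub, map_mul, map_pow, ev_map, xL]

variable [IsSplittingField F L (phiResolvent F)]

lemma splits_both : ((phiCubic F).toPoly.map (algebraMap F L)).Splits ∧
    ((X ^ 2 + C (2 * algebraMap ℂ[X] F X) : F[X]).map (algebraMap F L)).Splits := by
  have := IsSplittingField.splits L (phiResolvent F)
  rw [phiResolvent, Polynomial.map_mul, splits_mul] at this
  · exact this
  · exact (Polynomial.map_ne_zero_iff (algebraMap F L).injective).2
      (Cubic.ne_zero_of_a_ne_zero phiCubic_a)
  · exact (Polynomial.map_ne_zero_iff (algebraMap F L).injective).2 (quad_monic _).ne_zero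

variable (F L) in
lemma exists_roots [CharZero L] : ∃ (y : Fin 3 → L) (r w : L),
    (∀ k, phi (hh2 L) (xL F L) (y k) = 0) ∧ (∀ z, phi (hh2 L) (xL F L) z = 0 → ∃ k, z = y k) ∧
    r ^ 2 = -2 * xL F L ∧ w * (4 * (1 + hh2 L) * ev (hh2 L) (xL F L) lGG) =
      ev (hh2 L) (xL F L) lE0 ^ 2 * ((y 0 - y 1) * (y 1 - y 2) * (y 2 - y 0)) ∧
    w ^ 2 = ev (hh2 L) (xL F L) lD := by
  obtain ⟨h1, h2⟩ := splits_both (F := F) (L := L)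
  obtain ⟨a, b, c, habc⟩ := (Cubic.splits_iff_roots_eq_three phiCubic_a).1 h1
  have hmem : ∀ z, phi (hh2 L) (xL F L) z = 0 ↔ z = a ∨ z = b ∨ z = c := by
    intro z
    rw [← mem_phiCubic_roots, habc]
    simp
  have hdisc := Cubic.discr_eq_prod_three_roots phiCubic_a habc
  obtain ⟨r, hr⟩ := h2.exists_eval_eq_zero (by
    rw [degree_map, degree_eq_natDegree (quad_monic _).ne_zero]
    rw [natDegree_X_pow_add_C]; decide)
  simp only [Polynomial.map_add, Polynomial.map_pow, map_X, map_C, eval_add, eval_pow, eval_X,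
    eval_C] at hr
  rw [map_mul, map_ofNat] at hr
  set δ := (a - b) * (b - c) * (c - a) with hδ
  have hgg : (4 * (1 + hh2 L) * ev (hh2 L) (xL F L) lGG) ≠ 0 :=
    mul_ne_zero (mul_ne_zero (by norm_num) OcticData.one_add)
      (ev_hh2_ne_zero xL_tr _ (by decide))
  refine ⟨![a, b, c], r, ev (hh2 L) (xL F L) lE0 ^ 2 * δ /
    (4 * (1 + hh2 L) * ev (hh2 L) (xL F L) lGG), ?_, ?_, ?_, ?_, ?_⟩
  · intro k
    rw [hmem]
    fin_cases k <;> simp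
  · intro z hz
    rcases (hmem z).1 hz with h | h | h
    exacts [⟨0, h⟩, ⟨1, h⟩, ⟨2, h⟩]
  · rw [xL]; linear_combination hr
  · rw [div_mul_cancel₀ _ hgg]; rfl
  · rw [div_pow, div_eq_iff (pow_ne_zero 2 hgg)]
    have h3 := disc_phi (hh2_mul L) (xL F L)
    have h4 : algebraMap F L (phiCubic F).discr = (4 * (1 + hh2 L)) ^ 2 *
        ev (hh2 L) (xL F L) lGG ^ 2 * ev (hh2 L) (xL F L) lD := by
      rw [← h3]
      simp only [Cubic.discr, phiCubic, map_add, map_sub, map_mul, map_pow, map_neg, ev_map, xL,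
        map_ofNat]
      ring
    rw [h4] at hdisc
    have h5 : algebraMap F L (phiCubic F).a = ev (hh2 L) (xL F L) lE0 := by
      simp only [phiCubic, ev_map, xL]
    rw [h5] at hdisc
    linear_combination -hdisc

lemma isGalois_L : IsGalois F L := by
  have : CharZero F := charZero_of_injective_algebraMap (algebraMap ℂ F).injective
  have : Normal F L := Normal.of_isSplittingField (phiResolvent F)
  have := IsSplittingField.finiteDimensional L (phiResolvent F)
  exact { }

/-- The square root of a nonsquare of `F` is moved by some automorphism. -/
lemma exists_neg (s : L) (a : F) (hs : s ^ 2 = algebraMap F L a) (ha : ∀ z : F, z ^ 2 ≠ a) :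
    ∃ σ : L ≃ₐ[F] L, σ s = -s := by
  have := isGalois_L (F := F) (L := L)
  have := IsSplittingField.finiteDimensional L (phiResolvent F)
  have h1 : s ∉ Set.range (algebraMap F L) := by
    rintro ⟨z, rfl⟩
    rw [← map_pow] at hs
    exact ha z ((algebraMap F L).injective hs)
  rw [IsGalois.mem_range_algebraMap_iff_fixed] at h1
  push Not at h1
  obtain ⟨σ, hσ⟩ := h1
  refine ⟨σ, ?_⟩
  have h2 : (σ s) ^ 2 = s ^ 2 := by rw [← map_pow, hs, σ.commutes]
  exact (sq_eq_sq_iff_eq_or_eq_neg.1 h2).resolve_left hσ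

/-- The signs of `r = √(-2x)` and `w = √D(x)` can be changed independently, as `-2x`, `D(x)` and
`-2x D(x)` are all nonsquares. -/
lemma exists_signs [CharZero L] (r w : L) (hr : r ^ 2 = -2 * xL F L) (hw : w ^ 2 = ev (hh2 L) (xL F L) lD) :
    ∃ ι κ : L ≃ₐ[F] L, ι r = -r ∧ ι w = w ∧ κ r = r ∧ κ w = -w := by
  have hr' : r ^ 2 = algebraMap F L (-2 * algebraMap ℂ[X] F X) := by
    rw [hr, xL, map_mul, map_neg, map_ofNat]
  have hw' : w ^ 2 = algebraMap F L (ev (hh2 F) (algebraMap ℂ[X] F X) lD) := by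
    rw [hw, ev_map, xL]
  have fr : ∀ σ : L ≃ₐ[F] L, σ r = r ∨ σ r = -r := fun σ =>
    sq_eq_sq_iff_eq_or_eq_neg.1 (by rw [← map_pow, hr', σ.commutes])
  have fw : ∀ σ : L ≃ₐ[F] L, σ w = w ∨ σ w = -w := fun σ =>
    sq_eq_sq_iff_eq_or_eq_neg.1 (by rw [← map_pow, hw', σ.commutes])
  have r0 : r ≠ 0 := by
    rintro rfl
    apply not_sq_x (F := F) 0
    apply (algebraMap F L).injective
    rw [← hr']; simp
  have w0 : w ≠ 0 := by
    rintro rfl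
    apply not_sq_D (F := F) 0
    apply (algebraMap F L).injective
    rw [← hw']; simp
  obtain ⟨σ₁, h1⟩ := exists_neg r _ hr' not_sq_x
  obtain ⟨σ₂, h2⟩ := exists_neg w _ hw' not_sq_D
  obtain ⟨σ₃, h3⟩ := exists_neg (r * w) _ (by rw [mul_pow, hr', hw', ← map_mul]) not_sq_xD
  rw [map_mul] at h3
  -- the third automorphism changes exactly one of the two signs
  have h3' : (σ₃ r = -r ∧ σ₃ w = w) ∨ (σ₃ r = r ∧ σ₃ w = -w) := by
    rcases fr σ₃ with a | a <;> rcases fw σ₃ with b | b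
    · rw [a, b, self_eq_neg] at h3; exact absurd h3 (mul_ne_zero r0 w0)
    · exact Or.inr ⟨a, b⟩
    · exact Or.inl ⟨a, b⟩
    · rw [a, b, neg_mul_neg, self_eq_neg] at h3; exact absurd h3 (mul_ne_zero r0 w0)
  rcases h3' with ⟨a, b⟩ | ⟨a, b⟩
  · rcases fr σ₂ with c | c
    · exact ⟨σ₃, σ₂, a, b, c, h2⟩
    · exact ⟨σ₃, σ₃ * σ₂, a, b, by simp [c, a], by simp [h2, b]⟩
  · rcases fw σ₁ with c | c
    · exact ⟨σ₁, σ₃, h1, c, a, b⟩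
    · exact ⟨σ₃ * σ₁, σ₃, by simp [h1, a], by simp [c, b], a, b⟩

/-- The cubic `Φ(x, ·)` contributes the factor `3` to the degree, and the orbit of `(r, w)`, which has
four elements, contributes the factor `4`. -/
lemma twelve_dvd (y r w : L) (hy : phi (hh2 L) (xL F L) y = 0) (hr : r ^ 2 = -2 * xL F L)
    (hw : w ^ 2 = ev (hh2 L) (xL F L) lD) [CharZero L] : 12 ∣ Module.finrank F L := by
  have := isGalois_L (F := F) (L := L)
  have := IsSplittingField.finiteDimensional L (phiResolvent F)
  have h3 : 3 ∣ Module.finrank F L := by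
    have h1 := minpoly.degree_dvd (K := F) (L := L) (x := y) (IsIntegral.of_finite F y)
    have h2 : aeval y (phiCubic F).toPoly = 0 := by
      have := (mem_phiCubic_roots (F := F) y).2 hy
      rw [Cubic.map_roots] at this
      exact (mem_aroots.1 this).2
    rw [← minpoly.eq_of_irreducible phiCubic_irreducible h2, natDegree_mul_C,
      Cubic.natDegree_of_a_ne_zero phiCubic_a] at h1
    · exact h1
    · exact inv_ne_zero (leadingCoeff_ne_zero.2 phiCubic_irreducible.ne_zero)
  have h4 : 4 ∣ Module.finrank F L := by
    obtain ⟨ι, κ, ir, iw, kr, kw⟩ := exists_signs (F := F) r w hr hw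
    have r0 : r ≠ 0 := by
      rintro rfl
      rw [zero_pow two_ne_zero, eq_comm, mul_eq_zero] at hr
      rcases hr with h | h
      · simp at h
      · exact ev_hh2_ne_zero (xL_tr (F := F) (L := L)) [(0, 0), (1, 0)] (by decide) (by simp [h])
    have w0 : w ≠ 0 := by
      rintro rfl
      exact ev_hh2_ne_zero (xL_tr (F := F) (L := L)) lD (by decide) (by rw [← hw]; simp)
    have hsub : ({(r, w), (-r, w), (r, -w), (-r, -w)} : Set (L × L)) =
        MulAction.orbit (L ≃ₐ[F] L) (r, w) := by
      apply Set.Subset.antisymm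
      · rintro z (rfl | rfl | rfl | rfl)
        · exact ⟨1, by simp⟩
        · exact ⟨ι, by simp [ir, iw]⟩
        · exact ⟨κ, by simp [kr, kw]⟩
        · exact ⟨ι * κ, by simp [kr, kw, ir, iw]⟩
      · rintro z ⟨σ, rfl⟩
        have fr : σ r = r ∨ σ r = -r :=
          sq_eq_sq_iff_eq_or_eq_neg.1 (by rw [← map_pow, hr, map_mul, map_neg, map_ofNat, xL,
            σ.commutes])
        have fw : σ w = w ∨ σ w = -w :=
          sq_eq_sq_iff_eq_or_eq_neg.1 (by rw [← map_pow, hw, xL, ← ev_map, σ.commutes])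
        rcases fr with a | a <;> rcases fw with b | b <;> simp [a, b]
    have hc : (MulAction.orbit (L ≃ₐ[F] L) (r, w)).ncard = 4 := by
      rw [← hsub]
      classical
      rw [Set.ncard_eq_toFinset_card']
      simp [self_eq_neg, neg_eq_self, r0, w0]
    rw [← IsGalois.card_aut_eq_finrank F L, ← hc, ← MulAction.index_stabilizer]
    exact Subgroup.index_dvd_card _
  exact (by norm_num : Nat.Coprime 3 4).mul_dvd_of_dvd_of_dvd h3 h4

end SplittingField

/-! ### Construction of the field data -/
section Assembly
open QPoly

set_option linter.unusedSectionVars false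

variable {F : Type*} [Field F] [Algebra ℂ F] [Algebra ℂ[X] F] [IsFractionRing ℂ[X] F]
  [IsScalarTower ℂ ℂ[X] F] {L : Type*} [Field L] [Algebra F L] [Algebra ℂ L] [IsScalarTower ℂ F L]

/-- An automorphism fixing the Vandermonde product of the `y k` permutes them evenly, so its cube
fixes all of them. -/
lemma cube_fixes [CharZero L] (y : Fin 3 → L) (σ : L ≃ₐ[F] L) (hy : ∀ k, ∃ l, σ (y k) = y l)
    (hδ : (y 0 - y 1) * (y 1 - y 2) * (y 2 - y 0) ≠ 0)
    (hσ : σ ((y 0 - y 1) * (y 1 - y 2) * (y 2 - y 0)) =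
      (y 0 - y 1) * (y 1 - y 2) * (y 2 - y 0)) (k : Fin 3) :
    (σ ^ 3) (y k) = y k := by
  have h3 : ∀ z, (σ ^ 3) z = σ (σ (σ z)) := fun z => rfl
  obtain ⟨a, ha⟩ := hy 0
  obtain ⟨b, hb⟩ := hy 1
  obtain ⟨c, hc⟩ := hy 2
  rw [map_mul, map_mul, map_sub, map_sub, map_sub, ha, hb, hc] at hσ
  have hneg : ∀ d : L, d ≠ 0 → d ≠ -d := fun d hd h => hd (self_eq_neg.1 h)
  have key : (a = 0 ∧ b = 1 ∧ c = 2) ∨ (a = 1 ∧ b = 2 ∧ c = 0) ∨ (a = 2 ∧ b = 0 ∧ c = 1) := by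
    fin_cases a <;> fin_cases b <;> fin_cases c <;> simp at hσ ⊢ <;>
    first
    | exact hneg _ hδ (by linear_combination -hσ)
    | exact hδ (by simpa using hσ)
  rw [h3]
  rcases key with ⟨rfl, rfl, rfl⟩ | ⟨rfl, rfl, rfl⟩ | ⟨rfl, rfl, rfl⟩ <;> fin_cases k <;>
    simp [ha, hb, hc]

variable {K : Type*} [Field K] [Algebra ℂ K] [Algebra K F] [Algebra K L] [IsScalarTower ℂ K F]
  [IsScalarTower K F L] [IsScalarTower ℂ K L]

lemma algebraMap_mem_of_xL (M : IntermediateField K L) (hx : xL F L ∈ M) (z : F) :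
    algebraMap F L z ∈ M := by
  have hp : ∀ p : ℂ[X], algebraMap F L (algebraMap ℂ[X] F p) ∈ M := by
    intro p
    induction p using Polynomial.induction_on' with
    | add p q hp hq => rw [map_add, map_add]; exact M.add_mem hp hq
    | monomial n a =>
      rw [← C_mul_X_pow_eq_monomial, map_mul, map_mul, map_pow, map_pow]
      refine M.mul_mem ?_ (pow_mem hx n)
      rw [← Polynomial.algebraMap_eq, ← IsScalarTower.algebraMap_apply ℂ ℂ[X] F,
        ← IsScalarTower.algebraMap_apply ℂ F L, IsScalarTower.algebraMap_apply ℂ K L]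
      exact M.algebraMap_mem _
  obtain ⟨p, q, -, rfl⟩ := IsFractionRing.div_surjective (A := ℂ[X]) z
  rw [map_div₀]
  exact M.div_mem (hp p) (hp q)

variable [IsSplittingField F L (phiResolvent F)]

lemma gen_top (y : Fin 3 → L) (r : L)
    (hy : ∀ z, phi (hh2 L) (xL F L) z = 0 → ∃ k, z = y k) (hr : r ^ 2 = -2 * xL F L)
    (M : IntermediateField K L) (hx : xL F L ∈ M) (hyM : ∀ k, y k ∈ M) (hrM : r ∈ M) : M = ⊤ := by
  rw [eq_top_iff]
  rintro z -
  have hz : z ∈ Algebra.adjoin F ((phiResolvent F).rootSet L) := by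
    rw [IsSplittingField.adjoin_rootSet]; trivial
  induction hz using Algebra.adjoin_induction with
  | algebraMap z => exact algebraMap_mem_of_xL M hx z
  | add a b _ _ ha hb => exact M.add_mem ha hb
  | mul a b _ _ ha hb => exact M.mul_mem ha hb
  | mem z hz =>
    have h0 := (mem_rootSet.1 hz).2
    rw [phiResolvent, map_mul, mul_eq_zero] at h0
    rcases h0 with h0 | h0
    · have : z ∈ (Cubic.map (algebraMap F L) (phiCubic F)).roots := by
        rw [Cubic.map_roots]
        exact mem_aroots.2 ⟨Cubic.ne_zero_of_a_ne_zero phiCubic_a, h0⟩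
      obtain ⟨k, rfl⟩ := hy z ((mem_phiCubic_roots z).1 this)
      exact hyM k
    · rw [map_add, map_pow, aeval_X, aeval_C, map_mul, map_ofNat] at h0
      have h1 : z ^ 2 = r ^ 2 := by rw [hr, xL]; linear_combination h0
      rcases sq_eq_sq_iff_eq_or_eq_neg.1 h1 with rfl | rfl
      · exact hrM
      · exact M.neg_mem hrM

/-- The splitting field of `Φ(x, Y) (Y² + 2x)` carries the data. The automorphism `j` is the cube of one
that changes the sign of `r` and fixes `w`. -/
lemma exists_octicData [CharZero L] (T : K)
    (hT : algebraMap K F T * ev (hh2 F) (algebraMap ℂ[X] F X) lQ ^ 8 =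
      ev (hh2 F) (algebraMap ℂ[X] F X) lN) :
    (∃ d : OcticData K L, d.T = T) ∧ 12 ∣ Module.finrank F L := by
  obtain ⟨y, r, w, hy, hy', hr, hw, hw2⟩ := exists_roots F L
  refine ⟨?_, twelve_dvd (y 0) r w (hy 0) hr hw2⟩
  obtain ⟨ι, -, ir, iw, -, -⟩ := exists_signs (F := F) r w hr hw2
  have hE : ev (hh2 L) (xL F L) lE0 ≠ 0 := ev_hh2_ne_zero xL_tr _ (by decide)
  have w0 : w ≠ 0 := by
    rintro rfl
    exact ev_hh2_ne_zero (xL_tr (F := F) (L := L)) lD (by decide) (by rw [← hw2]; simp)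
  have hgg : (4 * (1 + hh2 L) * ev (hh2 L) (xL F L) lGG) ≠ 0 :=
    mul_ne_zero (mul_ne_zero (by norm_num) OcticData.one_add)
      (ev_hh2_ne_zero xL_tr _ (by decide))
  have ix : ι (xL F L) = xL F L := ι.commutes _
  have hδ : (y 0 - y 1) * (y 1 - y 2) * (y 2 - y 0) ≠ 0 := by
    intro h
    rw [h, mul_zero] at hw
    exact mul_ne_zero w0 hgg hw
  have hσ : ι ((y 0 - y 1) * (y 1 - y 2) * (y 2 - y 0)) =
      (y 0 - y 1) * (y 1 - y 2) * (y 2 - y 0) := by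
    have h1 := congrArg ι hw
    rw [map_mul _ w, map_mul _ (_ ^ 2), map_mul ι (4 * _), map_mul ι 4, map_add ι 1, map_pow, map_ev',
      map_ev', map_hh2, ix, iw, map_one, map_ofNat, hw] at h1
    exact (mul_left_cancel₀ (pow_ne_zero 2 hE) h1).symm
  have hperm : ∀ k, ∃ l, ι (y k) = y l := by
    intro k
    apply hy'
    have := map_phi ι (xL F L) (y k)
    rw [hy k, map_zero, ix] at this
    exact this.symm
  have i3 : ∀ z, (ι ^ 3) z = ι (ι (ι z)) := fun z => rfl
  refine ⟨{ x := xL F L, y := y, r := r, w := w, T := T, x_tr := xL_tr,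
            y_tr := fun k => y_transcendental (F := F) (y k) (hy k), phi_eq := hy, eq_y := hy',
            r_sq := hr, w_eq := hw, w_sq := hw2, T_eq := ?_,
            j := (ι ^ 3).restrictScalars K, j_x := ?_, j_y := ?_, j_r := ?_,
            gen := fun M hx hyM hrM => gen_top y r hy' hr M hx hyM hrM }, rfl⟩
  · rw [IsScalarTower.algebraMap_apply K F L, xL, ← ev_map, ← ev_map, ← hT, map_mul, map_pow]
  · rw [AlgEquiv.restrictScalars_apply]; exact (ι ^ 3).commutes _
  · intro k
    rw [AlgEquiv.restrictScalars_apply]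
    exact cube_fixes y ι hperm hδ hσ k
  · rw [AlgEquiv.restrictScalars_apply, i3, ir, map_neg, ir, neg_neg, ir]

end Assembly

/-! ### The Galois group over ℂ(t) -/
section Final
open QPoly

/-- The splitting field of `Φ(x, Y) (Y² + 2x)` over `ℂ(x)`. -/
noncomputable abbrev LL : Type := (phiResolvent FF).SplittingField

instance : IsScalarTower (RatFunc ℂ) FF LL := inferInstance
instance : IsScalarTower ℂ FF LL := inferInstance
instance : IsScalarTower ℂ (RatFunc ℂ) LL :=
  IsScalarTower.of_algebraMap_eq fun c => by
    rw [IsScalarTower.algebraMap_apply ℂ FF LL, IsScalarTower.algebraMap_apply ℂ (RatFunc ℂ) FF,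
      ← IsScalarTower.algebraMap_apply (RatFunc ℂ) FF LL]

/-- The relation `8⁸ t Q(x)⁸ = N(x)` in `ℂ(x)`. -/
lemma tF_eq : algebraMap (RatFunc ℂ) FF (8 ^ 8 * RatFunc.X) *
      ev (hh2 FF) (algebraMap ℂ[X] FF X) lQ ^ 8 = ev (hh2 FF) (algebraMap ℂ[X] FF X) lN := by
  rw [map_mul, map_pow, map_ofNat, ev_algebraMap, ev_algebraMap]
  have hq : algebraMap ℂ[X] FF (C (8 ^ 8) * toPoly lQ ^ 8) ≠ 0 := by
    rw [Ne, FaithfulSMul.algebraMap_eq_zero_iff]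
    exact mul_ne_zero (by rw [Ne, C_eq_zero]; norm_num)
      (pow_ne_zero _ (toPoly_ne_zero _ (by decide)))
  have h1 : algebraMap (RatFunc ℂ) FF RatFunc.X *
      algebraMap ℂ[X] FF (C (8 ^ 8) * toPoly lQ ^ 8) = algebraMap ℂ[X] FF (toPoly lN) := by
    rw [algebraMap_X_FF]
    exact div_mul_cancel₀ _ hq
  rw [← h1, map_mul, map_pow _ (toPoly lQ), map_pow C, map_pow, map_ofNat C, map_ofNat]
  ring

theorem gal_octic (P : (RatFunc ℂ)[X])
    (hP : P = ((X ^ 2 + C (((25 + 22 * Real.sqrt 2) / 64 : ℝ) : ℂ)) ^ 3 *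
            (X ^ 2 + X + C (((97 + 54 * Real.sqrt 2) / 64 : ℝ) : ℂ))).map
              (algebraMap ℂ (RatFunc ℂ)) - C RatFunc.X) :
    Nonempty (P.Gal ≃*
        (Matrix.GeneralLinearGroup (Fin 2) (ZMod 7) ⧸
          Subgroup.center (Matrix.GeneralLinearGroup (Fin 2) (ZMod 7)))) := by
  have : CharZero LL := charZero_of_injective_algebraMap (algebraMap ℂ LL).injective
  obtain ⟨⟨d, hd⟩, h12⟩ := exists_octicData (F := FF) (L := LL) (K := RatFunc ℂ) _ tF_eq
  have hfin := IsSplittingField.finiteDimensional LL (phiResolvent FF)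
  refine d.pgl ?_ P ?_ ?_
  · rw [← Module.finrank_mul_finrank (RatFunc ℂ) FF LL]
    exact Nat.mul_le_mul finrank_FF (Nat.le_of_dvd Module.finrank_pos h12)
  · rw [hP, natDegree_sub_C, natDegree_map]
    compute_degree!
  · intro z hz
    rw [hd, map_mul, map_pow, map_ofNat] at hz
    have e1 : algebraMap ℂ LL (((25 + 22 * Real.sqrt 2) / 64 : ℝ) : ℂ) =
        (25 + 22 * hh2 LL) / 64 := by
      rw [hh2, sq2]
      push_cast
      simp only [map_ofNat]
    have e2 : algebraMap ℂ LL (((97 + 54 * Real.sqrt 2) / 64 : ℝ) : ℂ) =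
        (97 + 54 * hh2 LL) / 64 := by
      rw [hh2, sq2]
      push_cast
      simp only [map_ofNat]
    rw [hP, map_sub, aeval_map_algebraMap, aeval_C]
    simp only [map_mul, map_add, map_pow, aeval_X, aeval_C, e1, e2]
    linear_combination (1 / 8 ^ 8 : LL) * hz

end Final

/-- The monodromy group of the degree-`8` polynomial
`p(X) = (X² + (25 + 22√2)/64)³ (X² + X + (97 + 54√2)/64)` is isomorphic to
`PGL₂(𝔽₇)`, the quotient of `GL₂(𝔽₇)` by its center. -/
theorem monodromy_of_deg8_exceptional :
    Nonempty
      (monodromyGroup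
          ((X ^ 2 + C (((25 + 22 * Real.sqrt 2) / 64 : ℝ) : ℂ)) ^ 3 *
            (X ^ 2 + X + C (((97 + 54 * Real.sqrt 2) / 64 : ℝ) : ℂ))) ≃*
        (Matrix.GeneralLinearGroup (Fin 2) (ZMod 7) ⧸
          Subgroup.center (Matrix.GeneralLinearGroup (Fin 2) (ZMod 7)))) :=
  gal_octic _ rfl
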